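/- Let U be a bounded connected open set in ℂ^m. Then there exists an injective holomorphic map F : B^m(0,1) → U from the open unit ball of ℂ^m into U such that the complement U \ F(B^m(0,1)) has Lebesgue measure zero. -/

import Mathlib

/-!
Start from an embedding `f` of a closed ball into `U`, and let `closedBall y ρ ⊆ U` be an almost
largest ball that touches the image of `f`, at `f x` say. In the direction of the unit normal at
`f x`, which is the image of `x` under the unitary part of the polar decomposition of `f' x`, add to
`f` a holomorphic spike whose singularity lies just outside the ball, near `x`. Away from
`x` the spike is negligible; near `x` it expands in directions compatible with `f' x`; and its
values lie in a horn inside the touching ball. So the sum is again an embedding, and its image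
contains a definite fraction of the touching ball.

Iterate on slightly growing balls. By Cauchy estimates, a sufficiently small perturbation keeps
the embedding injective and still covers the previous image, so the spikes can be chosen to make
the maps converge to an injective map covering every image. The absorbed parts of the touching
balls are disjoint, so `∑ ρ ^ (2 m) < ∞`. In particular `ρ → 0`, and since `U` is connected, the
images are dense in `U`. A missed point lies in infinitely many fourfold enlargements of the
touching balls, so Borel–Cantelli shows that the missed set is null.
-/

open Metric MeasureTheory

noncomputable instance {m : ℕ} : MeasurableSpace (EuclideanSpace ℂ (Fin m)) := borel _
instance {m : ℕ} : BorelSpace (EuclideanSpace ℂ (Fin m)) := ⟨rfl⟩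
noncomputable instance {m : ℕ} : InnerProductSpace ℝ (EuclideanSpace ℂ (Fin m)) :=
  InnerProductSpace.rclikeToReal ℂ _

/-- Lebesgue measure on `ℂ^m ≅ ℝ^{2m}`, as the Haar measure normalized on a real
orthonormal parallelepiped. -/
noncomputable instance {m : ℕ} : MeasureSpace (EuclideanSpace ℂ (Fin m)) :=
  measureSpaceOfInnerProductSpace

namespace BallFilling

open Filter Topology Set
open scoped InnerProductSpace ENNReal NNReal

/-! ### Perturbation of expanding holomorphic maps -/

section Holomorphic

theorem ball_sub_subset_ball {X : Type*} [PseudoMetricSpace X] {x z : X} {r t : ℝ}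
    (hz : z ∈ closedBall x r) :
    ball z (t - r) ⊆ ball x t :=
  ball_subset_ball' (by linarith [mem_closedBall.1 hz])

variable {E F : Type*} [NormedAddCommGroup E] [NormedSpace ℂ E] [NormedAddCommGroup F]
  [NormedSpace ℂ F]

theorem norm_fderiv_le_of_forall_norm_le {h : E → F} {z : E} {R ε : ℝ} (hR : 0 < R)
    (hd : DifferentiableOn ℂ h (ball z R)) (hb : ∀ w ∈ ball z R, ‖h w‖ ≤ ε) :
    ‖fderiv ℂ h z‖ ≤ 2 * ε / R := by
  refine Complex.norm_fderiv_le_div_of_mapsTo_ball hd (fun w hw => ?_) hR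
  rw [mem_closedBall, dist_eq_norm]
  linarith [norm_sub_le (h w) (h z), hb w hw, hb z (mem_ball_self hR)]

theorem norm_image_sub_le_of_forall_norm_le {h : E → F} {x : E} {r t ε : ℝ} (hrt : r < t)
    (hd : DifferentiableOn ℂ h (ball x t)) (hb : ∀ w ∈ ball x t, ‖h w‖ ≤ ε) {z w : E}
    (hz : z ∈ closedBall x r) (hw : w ∈ closedBall x r) :
    ‖h z - h w‖ ≤ 2 * ε / (t - r) * ‖z - w‖ := by
  refine (convex_closedBall x r).norm_image_sub_le_of_norm_fderiv_le (𝕜 := ℂ)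
    (fun v hv => hd.differentiableAt (isOpen_ball.mem_nhds (closedBall_subset_ball hrt hv)))
    (fun v hv => ?_) hw hz
  have hsub := ball_sub_subset_ball (t := t) hv
  exact norm_fderiv_le_of_forall_norm_le (sub_pos.2 hrt) (hd.mono hsub) fun u hu => hb u (hsub hu)

theorem uniformCauchySeqOn_fderiv {ι : Type*} {l : Filter ι} {f : ι → E → F} {x : E} {r t : ℝ}
    (hrt : r < t) (hd : ∀ i, DifferentiableOn ℂ (f i) (ball x t))
    (hf : UniformCauchySeqOn f l (ball x t)) :
    UniformCauchySeqOn (fun i => fderiv ℂ (f i)) l (ball x r) := by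
  intro u hu
  obtain ⟨δ, hδ, hδu⟩ := mem_uniformity_dist.1 hu
  have hpos : 0 < t - r := sub_pos.2 hrt
  filter_upwards [hf _ (dist_mem_uniformity (show 0 < δ * (t - r) / 4 by positivity))]
    with ⟨i, j⟩ hij z hz
  have hsub := ball_sub_subset_ball (t := t) (ball_subset_closedBall hz)
  have hz' : z ∈ ball x t := hsub (mem_ball_self hpos)
  have hdz : ∀ i, DifferentiableAt ℂ (f i) z := fun i =>
    (hd i).differentiableAt (isOpen_ball.mem_nhds hz')
  refine hδu ?_
  rw [dist_eq_norm, ← fderiv_sub (hdz i) (hdz j)]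
  refine (norm_fderiv_le_of_forall_norm_le hpos (((hd i).sub (hd j)).mono hsub) fun w hw =>
    (by simpa [dist_eq_norm] using (hij w (hsub hw)).le :
      ‖(f i - f j) w‖ ≤ δ * (t - r) / 4)).trans_lt ?_
  rw [div_lt_iff₀ hpos]
  linarith [mul_pos hδ hpos]

theorem differentiableOn_of_tendstoUniformlyOn [CompleteSpace F] {ι : Type*} {l : Filter ι}
    [l.NeBot] {f : ι → E → F} {G : E → F} {s : Set E} (hs : IsOpen s)
    (hd : ∀ i, DifferentiableOn ℂ (f i) s) (hf : TendstoUniformlyOn f G l s) :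
    DifferentiableOn ℂ G s := by
  intro x hx
  obtain ⟨t, ht, hts⟩ := Metric.isOpen_iff.1 hs x hx
  have hsub : ball x (t / 2) ⊆ s := (ball_subset_ball (by linarith)).trans hts
  have hcau : UniformCauchySeqOn (fun i => fderiv ℂ (f i)) l (ball x (t / 2)) :=
    uniformCauchySeqOn_fderiv (half_lt_self ht) (fun i => (hd i).mono hts)
      (hf.uniformCauchySeqOn.mono hts)
  have hlim : ∀ z ∈ ball x (t / 2), ∃ L, Tendsto (fun i => fderiv ℂ (f i) z) l (𝓝 L) :=
    fun z hz => cauchy_map_iff_exists_tendsto.1 (hcau.cauchy_map hz)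
  choose! L hL using hlim
  exact (hasFDerivAt_of_tendstoUniformlyOn isOpen_ball (hcau.tendstoUniformlyOn_of_tendsto hL)
    (fun i w hw => ((hd i).differentiableAt (hs.mem_nhds (hsub hw))).hasFDerivAt)
    (fun w hw => hf.tendsto_at (hsub hw))
    (mem_ball_self (half_pos ht))).differentiableAt.differentiableWithinAt

end Holomorphic

section Expanding

/-- `f` expands distances on `s` by a factor of at least `c`. The factor is a real number, rather
than the inverse of a nonnegative one as in `AntilipschitzWith`, because the factors arising here
are differences. -/
def ExpandsOn {E F : Type*} [NormedAddCommGroup E] [NormedAddCommGroup F] (c : ℝ) (f : E → F)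
    (s : Set E) : Prop :=
  ∀ ⦃z⦄, z ∈ s → ∀ ⦃w⦄, w ∈ s → c * ‖z - w‖ ≤ ‖f z - f w‖

namespace ExpandsOn

variable {E F : Type*} [NormedAddCommGroup E] [NormedAddCommGroup F] {c : ℝ} {f g : E → F}
  {s t : Set E}

theorem mono (hf : ExpandsOn c f t) (hst : s ⊆ t) : ExpandsOn c f s :=
  fun _ hz _ hw => hf (hst hz) (hst hw)

theorem mono_const {c' : ℝ} (hf : ExpandsOn c f s) (hc : c' ≤ c) : ExpandsOn c' f s :=
  fun _ hz _ hw => (mul_le_mul_of_nonneg_right hc (norm_nonneg _)).trans (hf hz hw)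

theorem injOn (hf : ExpandsOn c f s) (hc : 0 < c) : InjOn f s := by
  intro z hz w hw hzw
  have h := hf hz hw
  rw [hzw, sub_self, norm_zero] at h
  exact sub_eq_zero.1 (norm_le_zero_iff.1 (nonpos_of_mul_nonpos_right h hc))

theorem of_lipschitz_sub {c' : ℝ} (hf : ExpandsOn c f s)
    (hg : ∀ z ∈ s, ∀ w ∈ s, ‖(g z - f z) - (g w - f w)‖ ≤ c' * ‖z - w‖) :
    ExpandsOn (c - c') g s := by
  intro z hz w hw
  have h := norm_sub_le (g z - g w) ((g z - f z) - (g w - f w))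
  rw [show g z - g w - ((g z - f z) - (g w - f w)) = f z - f w by abel] at h
  linarith [hf hz hw, hg z hz w hw]

variable {𝕜 : Type*} [RCLike 𝕜] [NormedSpace 𝕜 E] [NormedSpace 𝕜 F]

theorem le_norm_hasFDerivAt {L : E →L[𝕜] F} {z : E} (hf : ExpandsOn c f s) (hs : s ∈ 𝓝 z)
    (hL : HasFDerivAt f L z) (v : E) : c * ‖v‖ ≤ ‖L v‖ := by
  have hslope := (hL.hasLineDerivAt v).tendsto_slope_zero.norm
  have hz : Tendsto (fun a : 𝕜 => z + a • v) (𝓝[≠] 0) (𝓝 z) := by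
    have : Continuous fun a : 𝕜 => z + a • v := by fun_prop
    simpa using (this.tendsto 0).mono_left nhdsWithin_le_nhds
  refine ge_of_tendsto hslope ?_
  filter_upwards [hz hs, self_mem_nhdsWithin] with a ha ha0
  have h := hf ha (mem_of_mem_nhds hs)
  have hpos : 0 < ‖a‖ := norm_pos_iff.2 ha0
  rw [add_sub_cancel_left, norm_smul] at h
  rw [norm_smul, norm_inv, le_inv_mul_iff₀ hpos]
  linarith

theorem injective_of_hasFDerivAt {L : E →L[𝕜] F} {z : E} (hf : ExpandsOn c f s) (hc : 0 < c)
    (hs : s ∈ 𝓝 z) (hL : HasFDerivAt f L z) : Function.Injective L := by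
  rw [injective_iff_map_eq_zero]
  intro v hv
  have h := hf.le_norm_hasFDerivAt hs hL v
  rw [hv, norm_zero] at h
  exact norm_le_zero_iff.1 (nonpos_of_mul_nonpos_right h hc)

theorem surjective_of_hasFDerivAt [FiniteDimensional 𝕜 E] {f : E → E} {L : E →L[𝕜] E} {z : E}
    (hf : ExpandsOn c f s) (hc : 0 < c) (hs : s ∈ 𝓝 z) (hL : HasFDerivAt f L z) :
    Function.Surjective L :=
  (LinearMap.injective_iff_surjective (f := (L : E →ₗ[𝕜] E))).1
    (hf.injective_of_hasFDerivAt hc hs hL)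

end ExpandsOn

theorem eq_of_isLocalMin_norm_sub_sq {E F : Type*} [NormedAddCommGroup E] [NormedSpace ℝ E]
    [NormedAddCommGroup F] [InnerProductSpace ℝ F] {g : E → F} {y : F} {z : E} {L : E →L[ℝ] F}
    (hL : HasFDerivAt g L z) (hsurj : Function.Surjective L)
    (hmin : IsLocalMin (fun w => ‖g w - y‖ ^ 2) z) : g z = y := by
  obtain ⟨v, hv⟩ := hsurj (g z - y)
  have h : ⟪g z, L v⟫_ℝ - ⟪y, L v⟫_ℝ = 0 := by
    simpa using DFunLike.congr_fun (hmin.hasFDerivAt_eq_zero (hL.sub_const y).norm_sq) v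
  rw [← inner_sub_left, hv, inner_self_eq_zero] at h
  exact sub_eq_zero.1 h

variable {E : Type*} [NormedAddCommGroup E] [InnerProductSpace ℂ E] [FiniteDimensional ℂ E]

theorem ExpandsOn.ball_subset_image_ball {g : E → E} {x : E} {c δ : ℝ} (hc : 0 < c)
    (hd : DifferentiableOn ℂ g (ball x δ)) (hg : ExpandsOn c g (ball x δ)) :
    ball (g x) (c * δ / 2) ⊆ g '' ball x δ := by
  have : ProperSpace E := FiniteDimensional.proper ℂ E
  intro y hy
  rw [mem_ball', dist_eq_norm] at hy
  obtain ⟨δ', hyδ', hδ'⟩ : ∃ δ', 2 * ‖g x - y‖ / c < δ' ∧ δ' < δ :=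
    exists_between (by rw [div_lt_iff₀ hc]; linarith)
  rw [div_lt_iff₀ hc] at hyδ'
  have hδ'0 : 0 < δ' := by
    by_contra! h
    nlinarith [norm_nonneg (g x - y)]
  have hsub : closedBall x δ' ⊆ ball x δ := closedBall_subset_ball hδ'
  obtain ⟨z, hz, hzmin⟩ := (isCompact_closedBall x δ').exists_isMinOn
    ⟨x, mem_closedBall_self hδ'0.le⟩
    (((hd.continuousOn.mono hsub).sub (continuousOn_const (c := y))).norm.pow 2)
  have hle : ‖g z - y‖ ≤ ‖g x - y‖ :=
    le_of_sq_le_sq (hzmin (mem_closedBall_self hδ'0.le)) (norm_nonneg _)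
  have hzb : z ∈ ball x δ' := by
    refine lt_of_le_of_ne (mem_closedBall.1 hz) fun heq => ?_
    have hexp := hg (hsub hz) (mem_ball_self (hδ'0.trans hδ'))
    rw [← dist_eq_norm, heq] at hexp
    have htri := norm_sub_le (g z - y) (g x - y)
    rw [sub_sub_sub_cancel_right] at htri
    linarith
  have hnhds : ball x δ ∈ 𝓝 z := isOpen_ball.mem_nhds (hsub hz)
  have hder := (hd.differentiableAt hnhds).hasFDerivAt
  have hsurj := hg.surjective_of_hasFDerivAt hc hnhds hder
  let _ : InnerProductSpace ℝ E := InnerProductSpace.complexToReal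
  refine ⟨z, hsub hz, eq_of_isLocalMin_norm_sub_sq (hder.restrictScalars ℝ) hsurj ?_⟩
  filter_upwards [isOpen_ball.mem_nhds hzb] with w hw
  exact hzmin (ball_subset_closedBall hw)

/-- The inclusion of `f '' closedBall 0 r` in `U` and its covering persist for every holomorphic map
`g` that is `e`-close to `f` on `ball 0 t`, and `g` is injective on `closedBall 0 r`. -/
def StableOn {E : Type*} [NormedAddCommGroup E] [NormedSpace ℂ E] (f : E → E) (r t e : ℝ)
    (U : Set E) : Prop :=
  ∀ g : E → E, DifferentiableOn ℂ g (ball 0 t) → (∀ z ∈ ball (0 : E) t, ‖g z - f z‖ ≤ e) →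
    InjOn g (closedBall 0 r) ∧ g '' closedBall 0 r ⊆ U ∧ f '' closedBall 0 r ⊆ g '' ball 0 t

theorem ExpandsOn.of_norm_sub_le {E F : Type*} [NormedAddCommGroup E] [NormedSpace ℂ E]
    [NormedAddCommGroup F] [NormedSpace ℂ F] {f g : E → F} {x : E} {r t c e : ℝ} (hrt : r < t)
    (hf : DifferentiableOn ℂ f (ball x t)) (hexp : ExpandsOn c f (ball x t))
    (hg : DifferentiableOn ℂ g (ball x t)) (hgf : ∀ z ∈ ball x t, ‖g z - f z‖ ≤ e) :
    ExpandsOn (c - 2 * e / (t - r)) g (closedBall x r) :=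
  (hexp.mono (closedBall_subset_ball hrt)).of_lipschitz_sub fun _ hz _ hw =>
    norm_image_sub_le_of_forall_norm_le hrt (hg.sub hf) hgf hz hw

theorem exists_stableOn {f : E → E} {r t c : ℝ} (hrt : r < t) (hc : 0 < c)
    (hf : DifferentiableOn ℂ f (ball 0 t)) (hexp : ExpandsOn c f (ball 0 t))
    {U : Set E} (hU : IsOpen U) (hfU : f '' closedBall 0 r ⊆ U) :
    ∃ e > 0, StableOn f r t e U := by
  have : ProperSpace E := FiniteDimensional.proper ℂ E
  have hcpt : IsCompact (f '' closedBall (0 : E) r) :=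
    (isCompact_closedBall _ _).image_of_continuousOn
      (hf.continuousOn.mono (closedBall_subset_ball hrt))
  obtain ⟨d, hd, hdU⟩ := hcpt.exists_thickening_subset_open hU hfU
  obtain ⟨δ, hδ⟩ : ∃ δ, δ = (t - r) / 2 := ⟨_, rfl⟩
  have hδ0 : 0 < δ := by linarith
  have hsub : closedBall (0 : E) (r + δ) ⊆ ball 0 t := closedBall_subset_ball (by linarith)
  have hsubr : closedBall (0 : E) r ⊆ closedBall 0 (r + δ) :=
    closedBall_subset_closedBall (by linarith)
  refine ⟨min (d / 2) (c * δ / 8), by positivity, fun g hg hgf => ?_⟩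
  obtain ⟨e, he⟩ : ∃ e, e = min (d / 2) (c * δ / 8) := ⟨_, rfl⟩
  rw [← he] at hgf
  have hed : e ≤ d / 2 := he.trans_le (min_le_left _ _)
  have hec : e ≤ c * δ / 8 := he.trans_le (min_le_right _ _)
  have hgexp : ExpandsOn (c / 2) g (closedBall 0 (r + δ)) := by
    refine (ExpandsOn.of_norm_sub_le (by linarith) hf hexp hg hgf).mono_const ?_
    have : 2 * e / (t - (r + δ)) ≤ c / 2 := by
      rw [show t - (r + δ) = δ by linarith, div_le_iff₀ hδ0]
      nlinarith
    linarith
  refine ⟨(hgexp.mono hsubr).injOn (half_pos hc), ?_, ?_⟩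
  · rintro _ ⟨z, hz, rfl⟩
    refine hdU (mem_thickening_iff.2 ⟨f z, mem_image_of_mem f hz, ?_⟩)
    rw [dist_eq_norm]
    linarith [hgf z (hsub (hsubr hz))]
  · rintro _ ⟨x, hx, rfl⟩
    have hball : ball x δ ⊆ closedBall 0 (r + δ) := ball_subset_closedBall.trans
      (closedBall_subset_closedBall' (by linarith [mem_closedBall.1 hx]))
    refine image_mono (hball.trans hsub) ((hgexp.mono hball).ball_subset_image_ball (half_pos hc)
      (hg.mono (hball.trans hsub)) ?_)
    rw [mem_ball', dist_eq_norm]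
    have := mul_pos hc hδ0
    linarith [hgf x (hsub (hsubr hx))]

end Expanding

/-! ### Normal directions and polar decomposition -/

section Normal

theorem norm_eq_one_and_eq_smul_of_forall_inner_le {E : Type*} [NormedAddCommGroup E]
    [InnerProductSpace ℝ E] {d x : E} (hd : d ≠ 0) (hx : ‖x‖ ≤ 1)
    (h : ∀ w, ‖w‖ ≤ 1 → ⟪d, w⟫_ℝ ≤ ⟪d, x⟫_ℝ) : ‖x‖ = 1 ∧ d = ‖d‖ • x := by
  have hd0 : 0 < ‖d‖ := norm_pos_iff.2 hd
  have hle : ‖d‖ ≤ ⟪d, x⟫_ℝ := by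
    have hw := h (‖d‖⁻¹ • d) (by rw [norm_smul, norm_inv, norm_norm, inv_mul_cancel₀ hd0.ne'])
    rwa [inner_smul_right, real_inner_self_eq_norm_sq, pow_two, inv_mul_cancel_left₀ hd0.ne'] at hw
  have hcs := real_inner_le_norm d x
  have hx1 : ‖x‖ = 1 := le_antisymm hx (le_of_mul_le_mul_left (by linarith) hd0)
  rw [hx1, mul_one] at hcs
  have heq := inner_eq_norm_mul_iff_real.1
    ((le_antisymm hcs hle).trans (by rw [hx1, mul_one]) : ⟪d, x⟫_ℝ = ‖d‖ * ‖x‖)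
  exact ⟨hx1, by rwa [hx1, one_smul] at heq⟩

theorem inner_hasFDerivAt_nonneg_of_isMinOn {E F : Type*} [NormedAddCommGroup E] [NormedSpace ℝ E]
    [NormedAddCommGroup F] [InnerProductSpace ℝ F] {g : E → F} {y : F} {s : Set E} {x w : E}
    {L : E →L[ℝ] F} (hs : Convex ℝ s) (hx : x ∈ s) (hw : w ∈ s) (hL : HasFDerivAt g L x)
    (hmin : IsMinOn (fun z => ‖g z - y‖ ^ 2) s x) : 0 ≤ ⟪g x - y, L (w - x)⟫_ℝ := by
  have h := hmin.localize.hasFDerivWithinAt_nonneg (hL.sub_const y).norm_sq.hasFDerivWithinAt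
    (sub_mem_posTangentConeAt_of_segment_subset (hs.segment_subset hx hw))
  have h' : 0 ≤ 2 * ⟪g x - y, L (w - x)⟫_ℝ := by
    simpa only [smul_apply, ContinuousLinearMap.comp_apply, innerSL_apply_apply, nsmul_eq_mul,
      Nat.cast_ofNat] using h
  linarith

variable {E : Type*} [NormedAddCommGroup E] [InnerProductSpace ℂ E] [FiniteDimensional ℂ E]

theorem exists_inner_eq_of_isMinOn_closedBall {f : E → E} {y x : E} {D : E →L[ℂ] E}
    (hx : x ∈ closedBall (0 : E) 1) (hD : HasFDerivAt f D x) (hsurj : Function.Surjective D)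
    (hy : f x ≠ y) (hmin : IsMinOn (fun z => ‖f z - y‖ ^ 2) (closedBall 0 1) x) :
    ‖x‖ = 1 ∧ ∃ a : ℝ, 0 < a ∧ ∀ v, ⟪y - f x, D v⟫_ℂ = a * ⟪x, v⟫_ℂ := by
  have : CompleteSpace E := FiniteDimensional.complete ℂ E
  let _ : InnerProductSpace ℝ E := InnerProductSpace.complexToReal
  obtain ⟨d, hd⟩ : ∃ d, d = ContinuousLinearMap.adjoint D (y - f x) := ⟨_, rfl⟩
  have hdv : ∀ v, ⟪y - f x, D v⟫_ℂ = ⟪d, v⟫_ℂ := fun v => by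
    rw [hd, ContinuousLinearMap.adjoint_inner_left]
  have hd0 : d ≠ 0 := by
    rintro rfl
    obtain ⟨v, hv⟩ := hsurj (y - f x)
    have h := hdv v
    rw [hv, inner_zero_left, inner_self_eq_zero, sub_eq_zero] at h
    exact hy h.symm
  have hmax : ∀ w, ‖w‖ ≤ 1 → ⟪d, w⟫_ℝ ≤ ⟪d, x⟫_ℝ := by
    intro w hw
    have h : 0 ≤ (⟪f x - y, D (w - x)⟫_ℂ).re := inner_hasFDerivAt_nonneg_of_isMinOn
      (convex_closedBall 0 1) hx (mem_closedBall_zero_iff.2 hw) (hD.restrictScalars ℝ) hmin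
    rw [← neg_sub y, inner_neg_left, hdv, inner_sub_right, Complex.neg_re, Complex.sub_re] at h
    change (⟪d, w⟫_ℂ).re ≤ (⟪d, x⟫_ℂ).re
    linarith
  obtain ⟨hx1, hdx⟩ := norm_eq_one_and_eq_smul_of_forall_inner_le hd0
    (mem_closedBall_zero_iff.1 hx) hmax
  refine ⟨hx1, ‖d‖, norm_pos_iff.2 hd0, fun v => ?_⟩
  rw [hdv]
  nth_rw 1 [hdx]
  rw [← Complex.coe_smul, inner_smul_left, Complex.conj_ofReal]

theorem exists_unit_normal_at_nearest_point {f : E → E} {r c : ℝ} {y : E} (hr : 1 < r) (hc : 0 < c)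
    (hf : DifferentiableOn ℂ f (ball 0 r)) (hexp : ExpandsOn c f (ball 0 r))
    (hy : 0 < infDist y (f '' closedBall 0 1)) :
    ∃ (x n : E) (a : ℝ), ‖x‖ = 1 ∧ ‖n‖ = 1 ∧ 0 < a ∧
      y = f x + (infDist y (f '' closedBall 0 1) : ℂ) • n ∧
      ∀ v, ⟪n, fderiv ℂ f x v⟫_ℂ = a * ⟪x, v⟫_ℂ := by
  have : ProperSpace E := FiniteDimensional.proper ℂ E
  have hsub : closedBall (0 : E) 1 ⊆ ball 0 r := closedBall_subset_ball hr
  obtain ⟨_, ⟨x, hx, rfl⟩, hxy⟩ :=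
    ((isCompact_closedBall (0 : E) 1).image_of_continuousOn
      (hf.continuousOn.mono hsub)).exists_infDist_eq_dist
      ⟨f 0, mem_image_of_mem f (mem_closedBall_self zero_le_one)⟩ y
  obtain ⟨ρ, hρ⟩ : ∃ ρ, ρ = infDist y (f '' closedBall 0 1) := ⟨_, rfl⟩
  rw [← hρ] at hy hxy ⊢
  have hmin : IsMinOn (fun z => ‖f z - y‖ ^ 2) (closedBall 0 1) x := by
    intro w hw
    have h : dist y (f x) ≤ dist y (f w) :=
      (hxy.symm.trans hρ).trans_le (infDist_le_dist_of_mem (mem_image_of_mem f hw))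
    rw [dist_comm, dist_comm y, dist_eq_norm, dist_eq_norm] at h
    exact pow_le_pow_left₀ (norm_nonneg _) h 2
  have hnhds : ball (0 : E) r ∈ 𝓝 x := isOpen_ball.mem_nhds (hsub hx)
  have hder := (hf.differentiableAt hnhds).hasFDerivAt
  obtain ⟨hx1, a, ha, hxa⟩ := exists_inner_eq_of_isMinOn_closedBall hx hder
    (hexp.surjective_of_hasFDerivAt hc hnhds hder)
    (fun h => hy.ne' (by rw [hxy, h, dist_self])) hmin
  have hρc : (ρ : ℂ) ≠ 0 := by exact_mod_cast hy.ne'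
  refine ⟨x, (ρ : ℂ)⁻¹ • (y - f x), a / ρ, hx1, ?_, div_pos ha hy, ?_, fun v => ?_⟩
  · rw [norm_smul, norm_inv, Complex.norm_real, Real.norm_of_nonneg hy.le, ← dist_eq_norm, ← hxy,
      inv_mul_cancel₀ hy.ne']
  · rw [smul_inv_smul₀ hρc, add_sub_cancel]
  · rw [inner_smul_left, hxa, map_inv₀, Complex.conj_ofReal]
    push_cast
    ring

end Normal

section Polar

variable {E : Type*} [NormedAddCommGroup E] [InnerProductSpace ℂ E]

theorem exists_pos_forall_le_re_inner_of_isPositive [FiniteDimensional ℂ E] {P : E →L[ℂ] E}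
    (hP : P.IsPositive) (hinj : Function.Injective P) :
    ∃ c > 0, ∀ v, c * ‖v‖ ^ 2 ≤ (⟪v, P v⟫_ℂ).re := by
  have : CompleteSpace E := FiniteDimensional.complete ℂ E
  have hP0 : 0 ≤ P := (ContinuousLinearMap.nonneg_iff_isPositive P).2 hP
  obtain ⟨Q, hQ⟩ : ∃ Q, Q = CFC.sqrt P := ⟨_, rfl⟩
  have hQsymm : (Q : E →ₗ[ℂ] E).IsSymmetric :=
    ((ContinuousLinearMap.nonneg_iff_isPositive Q).1 (hQ ▸ CFC.sqrt_nonneg P)).isSymmetric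
  have hQQ : ∀ v, Q (Q v) = P v :=
    fun v => DFunLike.congr_fun (hQ ▸ CFC.sqrt_mul_sqrt_self P hP0 : Q * Q = P) v
  have hQinj : Function.Injective Q := fun v w hvw => hinj (by rw [← hQQ, hvw, hQQ])
  obtain ⟨K, hK, hanti⟩ :=
    (Q : E →ₗ[ℂ] E).exists_antilipschitzWith (LinearMap.ker_eq_bot.2 hQinj)
  refine ⟨(K : ℝ)⁻¹ ^ 2, by positivity, fun v => ?_⟩
  have hQv : (K : ℝ)⁻¹ * ‖v‖ ≤ ‖Q v‖ := by
    rw [inv_mul_le_iff₀ (by positivity)]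
    exact hanti.le_mul_norm (map_zero _) v
  have hsq : ⟪v, P v⟫_ℂ = (‖Q v‖ ^ 2 : ℝ) := by
    rw [← hQQ]
    exact (hQsymm v (Q v)).symm.trans ((inner_self_eq_norm_sq_to_K _).trans (by norm_cast))
  rw [hsq, Complex.ofReal_re, ← mul_pow]
  exact pow_le_pow_left₀ (by positivity) hQv 2

theorem apply_eq_self_of_isPositive_of_apply_apply_eq {P : E →L[ℂ] E} (hP : P.IsPositive) {x : E}
    (hx : P (P x) = x) : P x = x := by
  have hneg : P (P x - x) = -(P x - x) := by rw [map_sub, hx, neg_sub]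
  have h := hP.re_inner_nonneg_left (P x - x)
  rw [hneg, inner_neg_left, map_neg, inner_self_eq_norm_sq] at h
  have h0 : ‖P x - x‖ = 0 := pow_eq_zero_iff two_ne_zero |>.1
    (le_antisymm (by linarith) (sq_nonneg _))
  exact sub_eq_zero.1 (norm_eq_zero.1 h0)

variable [FiniteDimensional ℂ E]

theorem exists_linearIsometryEquiv_apply_eq {P T : E →ₗ[ℂ] E} (hP : Function.Injective P)
    (hPT : ∀ v, ‖P v‖ = ‖T v‖) : ∃ M : E ≃ₗᵢ[ℂ] E, ∀ v, M (P v) = T v := by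
  let e : E ≃ₗ[ℂ] E := LinearEquiv.ofInjectiveEndo P hP
  have he : ∀ v, P (e.symm v) = v := e.apply_symm_apply
  let M : E →ₗᵢ[ℂ] E :=
    { toLinearMap := T.comp (e.symm : E →ₗ[ℂ] E)
      norm_map' := fun v => (hPT (e.symm v)).symm.trans (by rw [he]) }
  exact ⟨M.toLinearIsometryEquiv rfl, fun v => congrArg T (e.symm_apply_apply v)⟩

theorem exists_polar_decomposition {T : E →L[ℂ] E} (hT : Function.Injective T) :
    ∃ (M : E ≃ₗᵢ[ℂ] E) (P : E →L[ℂ] E), P.IsPositive ∧ Function.Injective P ∧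
      (∀ v, M (P v) = T v) ∧ ∀ v w, ⟪v, P (P w)⟫_ℂ = ⟪T v, T w⟫_ℂ := by
  have : CompleteSpace E := FiniteDimensional.complete ℂ E
  have hA : 0 ≤ ContinuousLinearMap.adjoint T * T :=
    (ContinuousLinearMap.nonneg_iff_isPositive _).2
      (ContinuousLinearMap.isPositive_adjoint_comp_self T)
  obtain ⟨P, hP⟩ : ∃ P, P = CFC.sqrt (ContinuousLinearMap.adjoint T * T) := ⟨_, rfl⟩
  have hPpos : P.IsPositive :=
    (ContinuousLinearMap.nonneg_iff_isPositive P).1 (hP ▸ CFC.sqrt_nonneg _)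
  have hPP : ∀ v w, ⟪v, P (P w)⟫_ℂ = ⟪T v, T w⟫_ℂ := fun v w => by
    rw [show P (P w) = ContinuousLinearMap.adjoint T (T w) from
      DFunLike.congr_fun (hP ▸ CFC.sqrt_mul_sqrt_self _ hA) w,
      ContinuousLinearMap.adjoint_inner_right]
  have hnorm : ∀ v, ‖P v‖ = ‖T v‖ := fun v => by
    rw [@norm_eq_sqrt_re_inner ℂ, @norm_eq_sqrt_re_inner ℂ, ← hPP,
      hPpos.inner_left_eq_inner_right]
  have hPinj : Function.Injective P := by
    rw [injective_iff_map_eq_zero] at hT ⊢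
    exact fun v hv => hT v (norm_eq_zero.1 (by rw [← hnorm, hv, norm_zero]))
  obtain ⟨M, hM⟩ := exists_linearIsometryEquiv_apply_eq (P := (P : E →ₗ[ℂ] E))
    (T := (T : E →ₗ[ℂ] E)) hPinj hnorm
  exact ⟨M, P, hPpos, hPinj, hM, hPP⟩

/-- The unitary map `M` straightens the injective operator `D` at the unit vector `x`: `M x` is
normal to the image of the complex hyperplane orthogonal to `x`, and `M⁻¹ D` is coercive on that
hyperplane. -/
structure IsAdapted (D : E →L[ℂ] E) (M : E ≃ₗᵢ[ℂ] E) (x : E) (a c : ℝ) : Prop where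
  norm_eq_one : ‖x‖ = 1
  a_pos : 0 < a
  c_pos : 0 < c
  inner_map : ∀ v, ⟪M x, D v⟫_ℂ = a * ⟪x, v⟫_ℂ
  coercive : ∀ v, ⟪x, v⟫_ℂ = 0 → c * ‖v‖ ^ 2 ≤ (⟪M v, D v⟫_ℂ).re

theorem exists_isAdapted {D : E →L[ℂ] E} (hD : Function.Injective D) {x n : E} {a : ℝ}
    (hx : ‖x‖ = 1) (hn : ‖n‖ = 1) (ha : 0 < a) (hnD : ∀ v, ⟪n, D v⟫_ℂ = a * ⟪x, v⟫_ℂ) :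
    ∃ (M : E ≃ₗᵢ[ℂ] E) (c : ℝ), M x = n ∧ IsAdapted D M x a c := by
  have hxx : ⟪x, x⟫_ℂ = 1 := by rw [inner_self_eq_norm_sq_to_K, hx]; norm_num
  have hnn : ⟪n, n⟫_ℂ = 1 := by rw [inner_self_eq_norm_sq_to_K, hn]; norm_num
  -- `T` agrees with `D` on the hyperplane orthogonal to `x` and sends `x` to `n`.
  let T : E →L[ℂ] E := (innerSL ℂ x).smulRight n +
    D.comp (ContinuousLinearMap.id ℂ E - (innerSL ℂ x).smulRight x)
  have hT : ∀ v, T v = ⟪x, v⟫_ℂ • n + D (v - ⟪x, v⟫_ℂ • x) := fun v => by simp [T]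
  have hnT : ∀ v, ⟪n, T v⟫_ℂ = ⟪x, v⟫_ℂ := fun v => by
    rw [hT, inner_add_right, inner_smul_right, hnn, hnD, inner_sub_right, inner_smul_right, hxx]
    ring
  have hTinj : Function.Injective T := by
    rw [injective_iff_map_eq_zero]
    intro v hv
    have hxv := hnT v
    rw [hv, inner_zero_right] at hxv
    rw [hT, ← hxv, zero_smul, zero_smul, zero_add, sub_zero] at hv
    exact (injective_iff_map_eq_zero D).1 hD v hv
  have hTx : T x = n := by rw [hT, hxx, one_smul, one_smul, sub_self, map_zero, add_zero]
  obtain ⟨M, P, hP, hPinj, hMP, hPP⟩ := exists_polar_decomposition hTinj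
  obtain ⟨c, hc, hcP⟩ := exists_pos_forall_le_re_inner_of_isPositive hP hPinj
  have hPx : P x = x := by
    refine apply_eq_self_of_isPositive_of_apply_apply_eq hP (ext_inner_left ℂ fun v => ?_)
    rw [hPP, hTx, ← inner_conj_symm, hnT, inner_conj_symm]
  have hMx : M x = n := by rw [← hTx, ← hMP, hPx]
  refine ⟨M, c, hMx, hx, ha, hc, hMx ▸ hnD, fun v hv => ?_⟩
  have hTv : T v = D v := by rw [hT, hv, zero_smul, zero_smul, zero_add, sub_zero]
  rw [← hTv, ← hMP, M.inner_map_map]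
  exact hcP v

theorem exists_isAdapted_at_nearest_point {f : E → E} {r c : ℝ} {y : E} (hr : 1 < r) (hc : 0 < c)
    (hf : DifferentiableOn ℂ f (ball 0 r)) (hexp : ExpandsOn c f (ball 0 r))
    (hy : 0 < infDist y (f '' closedBall 0 1)) :
    ∃ (M : E ≃ₗᵢ[ℂ] E) (x : E) (a c' : ℝ), IsAdapted (fderiv ℂ f x) M x a c' ∧
      y = f x + (infDist y (f '' closedBall 0 1) : ℂ) • M x := by
  obtain ⟨x, n, a, hx, hn, ha, hyx, hnD⟩ := exists_unit_normal_at_nearest_point hr hc hf hexp hy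
  have hnhds : ball (0 : E) r ∈ 𝓝 x :=
    isOpen_ball.mem_nhds (mem_ball_zero_iff.2 (hx.trans_lt hr))
  obtain ⟨M, c', rfl, hM⟩ := exists_isAdapted (hexp.injective_of_hasFDerivAt hc hnhds
    (hf.differentiableAt hnhds).hasFDerivAt) hx hn ha hnD
  exact ⟨M, x, a, c', hM, hyx⟩

end Polar

/-! ### The spike -/

section Sqrt

theorem sqrt_sq (u : ℂ) : u.sqrt ^ 2 = u := by
  simp [Complex.sqrt]

theorem norm_sqrt_sq (u : ℂ) : ‖u.sqrt‖ ^ 2 = ‖u‖ := by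
  rw [← norm_pow, sqrt_sq]

theorem re_sq_eq_sub (s : ℂ) : (s ^ 2).re = s.re ^ 2 - s.im ^ 2 := by
  rw [sq, Complex.mul_re]
  ring

theorem sqrt_re_pos {u : ℂ} (hu : 0 < u.re) : 0 < u.sqrt.re := by
  rw [Complex.sqrt, Complex.cpow_inv_two_re]
  positivity

theorem abs_sqrt_im_le {u : ℂ} (hu : 0 < u.re) : |u.sqrt.im| ≤ u.sqrt.re := by
  have hsq := re_sq_eq_sub u.sqrt
  rw [sqrt_sq] at hsq
  exact abs_le_of_sq_le_sq (by linarith) (sqrt_re_pos hu).le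

theorem sqrt_ne_zero {u : ℂ} (hu : 0 < u.re) : u.sqrt ≠ 0 := fun h =>
  (sqrt_re_pos hu).ne' (by rw [h, Complex.zero_re])

theorem sqrt_eq_of_sq_eq {u s : ℂ} (hs : 0 < s.re) (hu : 0 < u.re) (h : s ^ 2 = u) :
    u.sqrt = s := by
  rcases sq_eq_sq_iff_eq_or_eq_neg.1 ((sqrt_sq u).trans h.symm) with h' | h'
  · exact h'
  · have hpos := sqrt_re_pos hu
    rw [h', Complex.neg_re] at hpos
    linarith

theorem le_sqrt_re {u : ℂ} {σ : ℝ} (hσ : 0 < σ) (hσ1 : σ ≤ 1) (hu : σ ≤ u.re) :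
    σ ≤ u.sqrt.re := by
  have hsq := re_sq_eq_sub u.sqrt
  rw [sqrt_sq] at hsq
  refine le_of_sq_le_sq ?_ (sqrt_re_pos (hσ.trans_le hu)).le
  nlinarith [sq_nonneg u.sqrt.im]

theorem inv_re_nonneg {u : ℂ} (hu : 0 ≤ u.re) : 0 ≤ u⁻¹.re := by
  rw [Complex.inv_re]
  exact div_nonneg hu (Complex.normSq_nonneg u)

theorem mul_re_nonneg_of_abs_im_le {s t : ℂ} (hs : |s.im| ≤ s.re) (ht : |t.im| ≤ t.re) :
    0 ≤ (s * t).re := by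
  have h : |s.im * t.im| ≤ s.re * t.re := by
    rw [abs_mul]
    gcongr
    exact (abs_nonneg _).trans hs
  rw [Complex.mul_re]
  linarith [le_abs_self (s.im * t.im)]

theorem norm_le_two_mul_norm_add {A B : ℂ} (hA : |A.im| ≤ A.re) (hB : 0 ≤ B.re) :
    ‖A‖ ≤ 2 * ‖A + B‖ := by
  have hre := Complex.re_le_norm (A + B)
  rw [Complex.add_re] at hre
  linarith [Complex.norm_le_abs_re_add_abs_im A, abs_of_nonneg ((abs_nonneg _).trans hA)]

-- In the sector `|arg| ≤ π / 4` the increments of `a s²` and of `-b / s` cannot cancel: they are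
-- `(s - t) A` and `(s - t) B` with `|arg A| ≤ π / 4` and `0 ≤ re B`.
theorem norm_sq_sub_sq_le_and_norm_inv_sub_inv_le {s t : ℂ} {a b : ℝ} (ha : 0 ≤ a) (hb : 0 ≤ b)
    (hs : |s.im| ≤ s.re) (ht : |t.im| ≤ t.re) (hs0 : s ≠ 0) (ht0 : t ≠ 0) :
    a * ‖s ^ 2 - t ^ 2‖ ≤ 2 * ‖(a : ℂ) * (s ^ 2 - t ^ 2) - b * (s⁻¹ - t⁻¹)‖ ∧
    b * ‖s⁻¹ - t⁻¹‖ ≤ 3 * ‖(a : ℂ) * (s ^ 2 - t ^ 2) - b * (s⁻¹ - t⁻¹)‖ := by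
  obtain ⟨A, hA⟩ : ∃ A : ℂ, A = a * (s + t) := ⟨_, rfl⟩
  obtain ⟨B, hB⟩ : ∃ B : ℂ, B = b * (s * t)⁻¹ := ⟨_, rfl⟩
  have hsq : (a : ℂ) * (s ^ 2 - t ^ 2) = (s - t) * A := by rw [hA]; ring
  have hinv : (b : ℂ) * (s⁻¹ - t⁻¹) = -((s - t) * B) := by rw [hB]; field_simp; ring
  have hAim : |A.im| ≤ A.re := by
    rw [hA, Complex.re_ofReal_mul, Complex.im_ofReal_mul, abs_mul, abs_of_nonneg ha]
    gcongr
    rw [Complex.add_im, Complex.add_re]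
    exact (abs_add_le _ _).trans (add_le_add hs ht)
  have hBre : 0 ≤ B.re := by
    rw [hB, Complex.re_ofReal_mul]
    exact mul_nonneg hb (inv_re_nonneg (mul_re_nonneg_of_abs_im_le hs ht))
  have hA2 : ‖A‖ ≤ 2 * ‖A + B‖ := norm_le_two_mul_norm_add hAim hBre
  have hB3 : ‖B‖ ≤ 3 * ‖A + B‖ := by
    have h := norm_sub_le (A + B) A
    rw [add_sub_cancel_left] at h
    linarith
  have hsum : (a : ℂ) * (s ^ 2 - t ^ 2) - b * (s⁻¹ - t⁻¹) = (s - t) * (A + B) := by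
    rw [hsq, hinv]
    ring
  have hsq' : a * ‖s ^ 2 - t ^ 2‖ = ‖s - t‖ * ‖A‖ := by
    rw [← norm_mul, ← hsq, norm_mul, Complex.norm_of_nonneg ha]
  have hinv' : b * ‖s⁻¹ - t⁻¹‖ = ‖s - t‖ * ‖B‖ := by
    rw [← norm_mul, ← norm_neg ((s - t) * B), ← hinv, norm_mul, Complex.norm_of_nonneg hb]
  rw [hsum, norm_mul, hsq', hinv', mul_left_comm, mul_left_comm 3]
  exact ⟨by gcongr, by gcongr⟩

end Sqrt

section Spike

variable {E : Type*} [NormedAddCommGroup E] [InnerProductSpace ℂ E]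

/-- The component of `z` orthogonal to `x`, for a unit vector `x`. -/
noncomputable def perp (x z : E) : E := z - ⟪x, z⟫_ℂ • x

/-- For a unit vector `x` and small `β > 0`, a coordinate `u` with `re u > 0` on a neighbourhood of
the closed unit ball, small only near `x`; the spike at `x` is singular at `u = 0`, that is, at
distance `β` from the ball. -/
noncomputable def spikeCoord (x : E) (β : ℝ) (z : E) : ℂ := 1 + β - ⟪x, z⟫_ℂ

/-- The holomorphic spike at the boundary point `x` of the unit ball, in the direction `M x`. It
maps the ball to a thin neighbourhood of the ray through `M x`; the exponents `-1/2` and `-1` match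
the anisotropy `‖perp x z‖² ≲ ‖u‖` of the ball at `x`, where `u = spikeCoord x β z`. -/
noncomputable def spike (M : E ≃ₗᵢ[ℂ] E) (x : E) (β : ℝ) (z : E) : E :=
  (spikeCoord x β z).sqrt⁻¹ • M x + (2 * spikeCoord x β z)⁻¹ • M (perp x z)

variable {M : E ≃ₗᵢ[ℂ] E} {x : E} {β : ℝ}

theorem inner_self_of_norm_eq_one (hx : ‖x‖ = 1) : ⟪x, x⟫_ℂ = 1 := by
  rw [inner_self_eq_norm_sq_to_K, hx]
  norm_num

theorem norm_inner_le_of_norm_eq_one (hx : ‖x‖ = 1) (z : E) : ‖⟪x, z⟫_ℂ‖ ≤ ‖z‖ := by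
  simpa only [hx, one_mul] using norm_inner_le_norm (𝕜 := ℂ) x z

theorem perp_add_smul (x z : E) : perp x z + ⟪x, z⟫_ℂ • x = z :=
  sub_add_cancel _ _

theorem inner_perp (hx : ‖x‖ = 1) (z : E) : ⟪x, perp x z⟫_ℂ = 0 := by
  rw [perp, inner_sub_right, inner_smul_right, inner_self_of_norm_eq_one hx]
  ring

theorem perp_sub (x z w : E) : perp x (z - w) = perp x z - perp x w := by
  simp only [perp, inner_sub_right, sub_smul]
  abel

theorem norm_smul_add_sq (hx : ‖x‖ = 1) (a : ℂ) {v : E} (hv : ⟪x, v⟫_ℂ = 0) :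
    ‖a • x + v‖ ^ 2 = ‖a‖ ^ 2 + ‖v‖ ^ 2 := by
  have h := norm_add_sq_eq_norm_sq_add_norm_sq_of_inner_eq_zero (𝕜 := ℂ) (a • x) v
    (by rw [inner_smul_left, hv, mul_zero])
  rwa [norm_smul, hx, mul_one, ← sq, ← sq, ← sq] at h

theorem norm_sq_eq_norm_inner_sq_add_norm_perp_sq (hx : ‖x‖ = 1) (z : E) :
    ‖z‖ ^ 2 = ‖⟪x, z⟫_ℂ‖ ^ 2 + ‖perp x z‖ ^ 2 := by
  rw [← norm_smul_add_sq hx _ (inner_perp hx z), add_comm, perp_add_smul]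

theorem norm_perp_le (hx : ‖x‖ = 1) (z : E) : ‖perp x z‖ ≤ ‖z‖ :=
  le_of_sq_le_sq (by
    linarith [norm_sq_eq_norm_inner_sq_add_norm_perp_sq hx z, sq_nonneg ‖⟪x, z⟫_ℂ‖])
    (norm_nonneg z)

theorem spikeCoord_sub_spikeCoord (x : E) (β : ℝ) (z w : E) :
    spikeCoord x β z - spikeCoord x β w = -⟪x, z - w⟫_ℂ := by
  rw [spikeCoord, spikeCoord, inner_sub_right]
  ring

theorem spikeCoord_re (x : E) (β : ℝ) (z : E) :
    (spikeCoord x β z).re = 1 + β - (⟪x, z⟫_ℂ).re := by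
  simp [spikeCoord]

theorem lt_spikeCoord_re (hx : ‖x‖ = 1) {z : E} (hz : ‖z‖ < 1 + β / 2) :
    β / 2 < (spikeCoord x β z).re := by
  rw [spikeCoord_re]
  linarith [(Complex.re_le_norm _).trans (norm_inner_le_of_norm_eq_one hx z)]

theorem norm_perp_sq_le (hx : ‖x‖ = 1) (hβ : 0 < β) (hβ1 : β ≤ 1) {z : E}
    (hz : ‖z‖ < 1 + β / 2) : ‖perp x z‖ ^ 2 ≤ 3 * ‖spikeCoord x β z‖ := by
  have hpyth := norm_sq_eq_norm_inner_sq_add_norm_perp_sq hx z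
  have hxz := norm_inner_le_of_norm_eq_one hx z
  have hcoord : 1 + β - ‖⟪x, z⟫_ℂ‖ ≤ ‖spikeCoord x β z‖ := by
    have h := norm_sub_norm_le ((1 + β : ℝ) : ℂ) ⟪x, z⟫_ℂ
    rw [Complex.norm_of_nonneg (by linarith)] at h
    push_cast at h
    exact h
  calc ‖perp x z‖ ^ 2 = (‖z‖ + ‖⟪x, z⟫_ℂ‖) * (‖z‖ - ‖⟪x, z⟫_ℂ‖) := by linarith
    _ ≤ 3 * ‖spikeCoord x β z‖ := by
      gcongr <;> linarith

theorem inner_spike (hx : ‖x‖ = 1) (z : E) :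
    ⟪M x, spike M x β z⟫_ℂ = (spikeCoord x β z).sqrt⁻¹ := by
  rw [spike, inner_add_right, inner_smul_right, inner_smul_right, M.inner_map_map,
    M.inner_map_map, inner_self_of_norm_eq_one hx, inner_perp hx, mul_one, mul_zero, add_zero]

end Spike

section SpikeExpansion

variable {E : Type*} [NormedAddCommGroup E] [InnerProductSpace ℂ E]
  {M : E ≃ₗᵢ[ℂ] E} {x : E} {β η : ℝ} {D : E →L[ℂ] E} {a c : ℝ}

theorem IsAdapted.norm_inner_sub_le_and_norm_inv_sqrt_sub_le (h : IsAdapted D M x a c)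
    (hη : 0 ≤ η) {z w : E} (hz : 0 < (spikeCoord x β z).re) (hw : 0 < (spikeCoord x β w).re) :
    ‖⟪x, z - w⟫_ℂ‖ ≤ 2 / a * ‖D (z - w) + (η : ℂ) • (spike M x β z - spike M x β w)‖ ∧
    η * ‖(spikeCoord x β z).sqrt⁻¹ - (spikeCoord x β w).sqrt⁻¹‖ ≤
      3 * ‖D (z - w) + (η : ℂ) • (spike M x β z - spike M x β w)‖ := by
  obtain ⟨G, hG⟩ : ∃ G, G = D (z - w) + (η : ℂ) • (spike M x β z - spike M x β w) := ⟨_, rfl⟩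
  obtain ⟨hsq, hinv⟩ := norm_sq_sub_sq_le_and_norm_inv_sub_inv_le h.a_pos.le hη
    (abs_sqrt_im_le hz) (abs_sqrt_im_le hw) (sqrt_ne_zero hz) (sqrt_ne_zero hw)
  have hxG : (a : ℂ) * ((spikeCoord x β z).sqrt ^ 2 - (spikeCoord x β w).sqrt ^ 2) -
      η * ((spikeCoord x β z).sqrt⁻¹ - (spikeCoord x β w).sqrt⁻¹) = -⟪M x, G⟫_ℂ := by
    rw [hG, inner_add_right, h.inner_map, inner_smul_right, inner_sub_right (M x),
      inner_spike h.norm_eq_one, inner_spike h.norm_eq_one, sqrt_sq, sqrt_sq,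
      spikeCoord_sub_spikeCoord]
    ring
  have hGle : ‖⟪M x, G⟫_ℂ‖ ≤ ‖G‖ :=
    norm_inner_le_of_norm_eq_one (by rw [M.norm_map, h.norm_eq_one]) G
  rw [hxG, norm_neg] at hsq hinv
  rw [sqrt_sq, sqrt_sq, spikeCoord_sub_spikeCoord, norm_neg] at hsq
  rw [← hG, div_mul_eq_mul_div, le_div_iff₀ h.a_pos]
  exact ⟨by linarith, by linarith⟩

theorem IsAdapted.inner_map_perp_eq (h : IsAdapted D M x a c) {z w v : E}
    (hv : v = perp x (z - w)) :
    ⟪M v, D (z - w) + (η : ℂ) • (spike M x β z - spike M x β w)⟫_ℂ =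
      ⟪M v, D v⟫_ℂ + ⟪x, z - w⟫_ℂ * ⟪M v, D x⟫_ℂ + η * ((2 * spikeCoord x β z)⁻¹ * ⟪v, v⟫_ℂ) +
      η * (((2 * spikeCoord x β z)⁻¹ - (2 * spikeCoord x β w)⁻¹) * ⟪v, perp x w⟫_ℂ) := by
  have hMv : ⟪M v, M x⟫_ℂ = 0 := by
    rw [M.inner_map_map, hv, ← inner_conj_symm, inner_perp h.norm_eq_one, map_zero]
  have hD : D (z - w) = D v + ⟪x, z - w⟫_ℂ • D x := by
    rw [← map_smul, ← map_add, hv, perp_add_smul]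
  have hz : perp x z = v + perp x w := by
    rw [hv, perp_sub, sub_add_cancel]
  rw [hD, spike, spike, hz]
  simp only [inner_add_right, inner_sub_right, inner_smul_right, hMv, M.inner_map_map, map_add]
  ring

theorem re_inv_mul_inner_self_nonneg {u : ℂ} (hu : 0 ≤ u.re) (hη : 0 ≤ η) (v : E) :
    0 ≤ ((η : ℂ) * ((2 * u)⁻¹ * ⟪v, v⟫_ℂ)).re := by
  have h : (η : ℂ) * ((2 * u)⁻¹ * ⟪v, v⟫_ℂ) = ((η * ‖v‖ ^ 2 / 2 : ℝ) : ℂ) * u⁻¹ := by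
    have hself : ⟪v, v⟫_ℂ = ((‖v‖ ^ 2 : ℝ) : ℂ) := by
      rw [inner_self_eq_norm_sq_to_K, Complex.ofReal_pow]
      rfl
    rw [hself, mul_inv]
    push_cast
    ring
  rw [h, Complex.re_ofReal_mul]
  exact mul_nonneg (by positivity) (inv_re_nonneg hu)

theorem norm_inv_sub_inv_mul_inner_perp_le (hx : ‖x‖ = 1) (hβ : 0 < β) (hβ1 : β ≤ 1) {z w : E}
    (hz : ‖z‖ < 1 + β / 2) (hw : ‖w‖ < 1 + β / 2)
    (hzw : ‖spikeCoord x β w‖ ≤ ‖spikeCoord x β z‖) (v : E) :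
    ‖((2 * spikeCoord x β z)⁻¹ - (2 * spikeCoord x β w)⁻¹) * ⟪v, perp x w⟫_ℂ‖ ≤
      2 * ‖(spikeCoord x β z).sqrt⁻¹ - (spikeCoord x β w).sqrt⁻¹‖ * ‖v‖ := by
  have hpw := norm_perp_sq_le hx hβ hβ1 hw
  have hs0 := sqrt_ne_zero ((half_pos hβ).trans (lt_spikeCoord_re hx hz))
  have ht0 := sqrt_ne_zero ((half_pos hβ).trans (lt_spikeCoord_re hx hw))
  obtain ⟨s, hs⟩ : ∃ s, s = (spikeCoord x β z).sqrt := ⟨_, rfl⟩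
  obtain ⟨t, ht⟩ : ∃ t, t = (spikeCoord x β w).sqrt := ⟨_, rfl⟩
  rw [← hs] at hs0
  rw [← ht] at ht0
  have hs2 : s ^ 2 = spikeCoord x β z := by rw [hs, sqrt_sq]
  have ht2 : t ^ 2 = spikeCoord x β w := by rw [ht, sqrt_sq]
  rw [← hs2, ← ht2, norm_pow, norm_pow] at hzw
  rw [← ht2, norm_pow] at hpw
  rw [← hs, ← ht, ← hs2, ← ht2]
  have htpos : 0 < ‖t‖ := norm_pos_iff.2 ht0
  have hts : ‖t‖ ≤ ‖s‖ := le_of_sq_le_sq hzw (norm_nonneg _)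
  have hsum : ‖(s⁻¹ + t⁻¹) / 2‖ ≤ ‖t‖⁻¹ := by
    rw [norm_div, Complex.norm_two, div_le_iff₀ two_pos]
    refine (norm_add_le _ _).trans ?_
    rw [norm_inv, norm_inv]
    linarith [inv_anti₀ htpos hts]
  have hperp : ‖perp x w‖ ≤ 2 * ‖t‖ :=
    le_of_sq_le_sq (by nlinarith [sq_nonneg ‖t‖]) (by positivity)
  have hinner : ‖⟪v, perp x w⟫_ℂ‖ ≤ ‖v‖ * (2 * ‖t‖) :=
    (norm_inner_le_norm _ _).trans (by gcongr)
  have hfac : (2 * s ^ 2)⁻¹ - (2 * t ^ 2)⁻¹ = (s⁻¹ - t⁻¹) * ((s⁻¹ + t⁻¹) / 2) := by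
    field_simp
    ring
  rw [hfac, norm_mul, norm_mul]
  calc ‖s⁻¹ - t⁻¹‖ * ‖(s⁻¹ + t⁻¹) / 2‖ * ‖⟪v, perp x w⟫_ℂ‖
      ≤ ‖s⁻¹ - t⁻¹‖ * ‖t‖⁻¹ * (‖v‖ * (2 * ‖t‖)) := by gcongr
    _ = 2 * ‖s⁻¹ - t⁻¹‖ * ‖v‖ := by field_simp

theorem IsAdapted.norm_perp_sub_le (h : IsAdapted D M x a c) (hη : 0 < η) (hβ : 0 < β)
    (hβ1 : β ≤ 1) {z w : E} (hz : ‖z‖ < 1 + β / 2) (hw : ‖w‖ < 1 + β / 2)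
    (hzw : ‖spikeCoord x β w‖ ≤ ‖spikeCoord x β z‖) :
    ‖perp x (z - w)‖ ≤
      (7 + 2 * ‖D‖ / a) / c * ‖D (z - w) + (η : ℂ) • (spike M x β z - spike M x β w)‖ := by
  have hx := h.norm_eq_one
  have ha := h.a_pos
  have hzre := (half_pos hβ).trans (lt_spikeCoord_re hx hz)
  have hwre := (half_pos hβ).trans (lt_spikeCoord_re hx hw)
  obtain ⟨hnormal, hsqrt⟩ := h.norm_inner_sub_le_and_norm_inv_sqrt_sub_le hη.le hzre hwre
  obtain ⟨v, hv⟩ : ∃ v, v = perp x (z - w) := ⟨_, rfl⟩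
  have hexpand := congrArg Complex.re (h.inner_map_perp_eq (η := η) (β := β) hv)
  obtain ⟨G, hG⟩ : ∃ G, G = D (z - w) + (η : ℂ) • (spike M x β z - spike M x β w) := ⟨_, rfl⟩
  rw [← hG] at hnormal hsqrt hexpand ⊢
  simp only [Complex.add_re] at hexpand
  have hleft : (⟪M v, G⟫_ℂ).re ≤ ‖v‖ * ‖G‖ := by
    simpa only [M.norm_map] using (Complex.re_le_norm _).trans (norm_inner_le_norm (𝕜 := ℂ) (M v) G)
  have hmixed : ‖⟪x, z - w⟫_ℂ * ⟪M v, D x⟫_ℂ‖ ≤ 2 / a * ‖G‖ * (‖v‖ * ‖D‖) := by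
    have hDx : ‖⟪M v, D x⟫_ℂ‖ ≤ ‖v‖ * ‖D‖ := by
      refine (norm_inner_le_norm _ _).trans ?_
      rw [M.norm_map]
      gcongr
      simpa only [hx, mul_one] using D.le_opNorm x
    rw [norm_mul]
    gcongr
  have hcross : ‖(η : ℂ) * (((2 * spikeCoord x β z)⁻¹ - (2 * spikeCoord x β w)⁻¹) *
      ⟪v, perp x w⟫_ℂ)‖ ≤ 6 * ‖G‖ * ‖v‖ := by
    rw [norm_mul, Complex.norm_of_nonneg hη.le]
    have := norm_inv_sub_inv_mul_inner_perp_le hx hβ hβ1 hz hw hzw v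
    nlinarith [mul_le_mul_of_nonneg_right hsqrt (norm_nonneg v)]
  have hsq : c * ‖v‖ ^ 2 ≤ (7 + 2 * ‖D‖ / a) * ‖G‖ * ‖v‖ := by
    have hpos := re_inv_mul_inner_self_nonneg hzre.le hη.le v
    have hcoer := h.coercive v (hv ▸ inner_perp hx _)
    have hm := (abs_le.1 ((Complex.abs_re_le_norm _).trans hmixed)).1
    have hcr := (abs_le.1 ((Complex.abs_re_le_norm _).trans hcross)).1
    have hring : (7 + 2 * ‖D‖ / a) * ‖G‖ * ‖v‖ =
      ‖v‖ * ‖G‖ + 2 / a * ‖G‖ * (‖v‖ * ‖D‖) + 6 * ‖G‖ * ‖v‖ := by ring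
    linarith
  rw [← hv, div_mul_eq_mul_div, le_div_iff₀ h.c_pos]
  rcases (norm_nonneg v).eq_or_lt with hv0 | hv0
  · rw [← hv0, zero_mul]
    positivity
  · exact le_of_mul_le_mul_right (by linarith) hv0

theorem IsAdapted.exists_norm_sub_le (h : IsAdapted D M x a c) :
    ∃ C > 0, ∀ β > 0, β ≤ 1 → ∀ η : ℝ, 0 < η → ∀ z w : E, ‖z‖ < 1 + β / 2 → ‖w‖ < 1 + β / 2 →
      ‖z - w‖ ≤ C * ‖D (z - w) + (η : ℂ) • (spike M x β z - spike M x β w)‖ := by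
  have ha := h.a_pos
  have hc := h.c_pos
  refine ⟨(7 + 2 * ‖D‖ / a) / c + 2 / a, by positivity, fun β hβ hβ1 η hη z w hz hw => ?_⟩
  -- The tangential estimate needs `w` to be the point closer to the singularity of the spike.
  wlog hzw : ‖spikeCoord x β w‖ ≤ ‖spikeCoord x β z‖ generalizing z w
  · have := this w z hw hz (le_of_not_ge hzw)
    rwa [← norm_neg (D (w - z) + _), neg_add, ← map_neg, ← smul_neg, neg_sub, neg_sub,
      norm_sub_rev] at this
  have hx := h.norm_eq_one
  calc ‖z - w‖ = ‖perp x (z - w) + ⟪x, z - w⟫_ℂ • x‖ := by rw [perp_add_smul]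
    _ ≤ ‖perp x (z - w)‖ + ‖⟪x, z - w⟫_ℂ‖ := by
      refine (norm_add_le _ _).trans ?_
      rw [norm_smul, hx, mul_one]
    _ ≤ _ := by
      rw [add_mul]
      exact add_le_add (h.norm_perp_sub_le hη hβ hβ1 hz hw hzw)
        (h.norm_inner_sub_le_and_norm_inv_sqrt_sub_le hη.le
          ((half_pos hβ).trans (lt_spikeCoord_re hx hz))
          ((half_pos hβ).trans (lt_spikeCoord_re hx hw))).1

end SpikeExpansion

section SpikeBounds

variable {E : Type*} [NormedAddCommGroup E] [InnerProductSpace ℂ E]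
  {M : E ≃ₗᵢ[ℂ] E} {x : E} {β σ : ℝ}

theorem norm_inv_sqrt_le {u : ℂ} (hσ : 0 < σ) (hσ1 : σ ≤ 1) (hu : σ ≤ u.re) :
    ‖u.sqrt⁻¹‖ ≤ σ⁻¹ := by
  rw [norm_inv]
  exact inv_anti₀ hσ ((le_sqrt_re hσ hσ1 hu).trans (Complex.re_le_norm _))

theorem norm_inv_le_of_le_re {u : ℂ} (hσ : 0 < σ) (hu : σ ≤ u.re) : ‖u⁻¹‖ ≤ σ⁻¹ := by
  rw [norm_inv]
  exact inv_anti₀ hσ (hu.trans (Complex.re_le_norm _))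

theorem norm_inv_two_mul_le {u : ℂ} (hσ : 0 < σ) (hu : σ ≤ u.re) :
    ‖(2 * u)⁻¹‖ ≤ σ⁻¹ / 2 := by
  rw [mul_inv, norm_mul, norm_inv, Complex.norm_two, inv_mul_eq_div]
  gcongr
  exact norm_inv_le_of_le_re hσ hu

theorem norm_inv_two_mul_sub_le {u v : ℂ} (hσ : 0 < σ) (hu : σ ≤ u.re) (hv : σ ≤ v.re) :
    ‖(2 * u)⁻¹ - (2 * v)⁻¹‖ ≤ ‖v - u‖ / (2 * σ ^ 2) := by
  have hu0 : u ≠ 0 := norm_pos_iff.1 (hσ.trans_le (hu.trans (Complex.re_le_norm _)))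
  have hv0 : v ≠ 0 := norm_pos_iff.1 (hσ.trans_le (hv.trans (Complex.re_le_norm _)))
  have heq : (2 * u)⁻¹ - (2 * v)⁻¹ = (v - u) * ((2 * u)⁻¹ * v⁻¹) := by
    field_simp
  calc ‖(2 * u)⁻¹ - (2 * v)⁻¹‖ = ‖v - u‖ * (‖(2 * u)⁻¹‖ * ‖v⁻¹‖) := by
        rw [heq, norm_mul, norm_mul]
    _ ≤ ‖v - u‖ * (σ⁻¹ / 2 * σ⁻¹) := by
        gcongr
        · exact norm_inv_two_mul_le hσ hu
        · exact norm_inv_le_of_le_re hσ hv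
    _ = _ := by field_simp

theorem norm_inv_sqrt_sub_le {u v : ℂ} (hσ : 0 < σ) (hσ1 : σ ≤ 1) (hu : σ ≤ u.re)
    (hv : σ ≤ v.re) : ‖u.sqrt⁻¹ - v.sqrt⁻¹‖ ≤ ‖v - u‖ / σ ^ 2 := by
  have hu0 := sqrt_ne_zero (hσ.trans_le hu)
  have hv0 := sqrt_ne_zero (hσ.trans_le hv)
  have hmul : σ ≤ ‖u.sqrt * v.sqrt‖ := by
    refine le_of_sq_le_sq ?_ (norm_nonneg _)
    rw [norm_mul, mul_pow, norm_sqrt_sq, norm_sqrt_sq, sq]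
    exact mul_le_mul (hu.trans (Complex.re_le_norm _)) (hv.trans (Complex.re_le_norm _)) hσ.le
      (norm_nonneg _)
  have hadd : σ ≤ ‖u.sqrt + v.sqrt‖ := by
    refine le_trans ?_ (Complex.re_le_norm _)
    rw [Complex.add_re]
    linarith [le_sqrt_re hσ hσ1 hu, le_sqrt_re hσ hσ1 hv]
  have hadd0 : u.sqrt + v.sqrt ≠ 0 := norm_pos_iff.1 (hσ.trans_le hadd)
  have heq : u.sqrt⁻¹ - v.sqrt⁻¹ = (v - u) / (u.sqrt * v.sqrt * (u.sqrt + v.sqrt)) := by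
    rw [eq_div_iff (by positivity)]
    conv_rhs => rw [← sqrt_sq u, ← sqrt_sq v]
    field_simp
    ring
  rw [heq, norm_div, norm_mul _ (_ + _), sq]
  gcongr

theorem norm_spike_le (hx : ‖x‖ = 1) (hσ : 0 < σ) (hσ1 : σ ≤ 1) {z : E} (hz : ‖z‖ ≤ 2)
    (hu : σ ≤ (spikeCoord x β z).re) : ‖spike M x β z‖ ≤ 2 / σ := by
  refine (norm_add_le _ _).trans ?_
  rw [norm_smul, norm_smul, M.norm_map, M.norm_map, hx]
  calc ‖(spikeCoord x β z).sqrt⁻¹‖ * 1 + ‖(2 * spikeCoord x β z)⁻¹‖ * ‖perp x z‖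
      ≤ σ⁻¹ * 1 + σ⁻¹ / 2 * 2 := by
        gcongr
        · exact norm_inv_sqrt_le hσ hσ1 hu
        · exact norm_inv_two_mul_le hσ hu
        · exact (norm_perp_le hx z).trans hz
    _ = 2 / σ := by ring

theorem norm_spike_sub_spike_le (hx : ‖x‖ = 1) (hσ : 0 < σ) (hσ1 : σ ≤ 1) {z w : E}
    (hw : ‖w‖ ≤ 2) (hu : σ ≤ (spikeCoord x β z).re) (hv : σ ≤ (spikeCoord x β w).re) :
    ‖spike M x β z - spike M x β w‖ ≤ 3 / σ ^ 2 * ‖z - w‖ := by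
  have hdiff : ‖spikeCoord x β w - spikeCoord x β z‖ ≤ ‖z - w‖ := by
    rw [norm_sub_rev, spikeCoord_sub_spikeCoord, norm_neg]
    exact norm_inner_le_of_norm_eq_one hx _
  have hsqrt := (norm_inv_sqrt_sub_le hσ hσ1 hu hv).trans (div_le_div_of_nonneg_right hdiff
    (by positivity))
  have hinv := (norm_inv_two_mul_sub_le hσ hu hv).trans (div_le_div_of_nonneg_right hdiff
    (by positivity))
  have heq : spike M x β z - spike M x β w =
      ((spikeCoord x β z).sqrt⁻¹ - (spikeCoord x β w).sqrt⁻¹) • M x +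
      ((2 * spikeCoord x β z)⁻¹ • M (perp x (z - w)) +
        ((2 * spikeCoord x β z)⁻¹ - (2 * spikeCoord x β w)⁻¹) • M (perp x w)) := by
    rw [spike, spike, perp_sub, map_sub]
    module
  rw [heq]
  refine (norm_add_le _ _).trans ((add_le_add_right (norm_add_le _ _) _).trans ?_)
  rw [norm_smul, norm_smul, norm_smul, M.norm_map, M.norm_map, M.norm_map, hx]
  have hσσ : σ⁻¹ ≤ 1 / σ ^ 2 := by
    rw [inv_eq_one_div]
    exact one_div_le_one_div_of_le (by positivity) (by nlinarith)
  calc _ ≤ ‖z - w‖ / σ ^ 2 * 1 + (1 / σ ^ 2 / 2 * ‖z - w‖ + ‖z - w‖ / (2 * σ ^ 2) * 2) := by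
        gcongr
        · exact (norm_inv_two_mul_le hσ hu).trans (by gcongr)
        · exact norm_perp_le hx _
        · exact (norm_perp_le hx w).trans hw
    _ = 5 / 2 / σ ^ 2 * ‖z - w‖ := by
        field_simp
        norm_num
    _ ≤ 3 / σ ^ 2 * ‖z - w‖ := by
        gcongr
        norm_num

theorem differentiable_perp (x : E) : Differentiable ℂ (perp x) :=
  differentiable_id.sub ((innerSL ℂ x).differentiable.smul_const x)

theorem differentiable_spikeCoord (x : E) (β : ℝ) : Differentiable ℂ (spikeCoord x β) :=
  (innerSL ℂ x).differentiable.const_sub (1 + β : ℂ)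

theorem differentiableAt_spike {z : E} (hu : 0 < (spikeCoord x β z).re) :
    DifferentiableAt ℂ (spike M x β) z := by
  have hcoord := differentiable_spikeCoord x β z
  have hne : 2 * spikeCoord x β z ≠ 0 :=
    mul_ne_zero two_ne_zero fun h => hu.ne' (by rw [h, Complex.zero_re])
  have hsqrt : DifferentiableAt ℂ (fun z => (spikeCoord x β z).sqrt) z :=
    hcoord.cpow (differentiableAt_const _) (Complex.mem_slitPlane_iff.2 (Or.inl hu))
  exact ((hsqrt.inv (sqrt_ne_zero hu)).smul_const (M x)).add
    (((hcoord.const_mul 2).inv hne).smul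
      (M.toContinuousLinearEquiv.differentiable.comp (differentiable_perp x) z))

end SpikeBounds

section Horn

variable {E : Type*} [NormedAddCommGroup E] [InnerProductSpace ℂ E]
  {M : E ≃ₗᵢ[ℂ] E} {x n : E} {β ρ η : ℝ}

/-- A closed cusp-free region with vertex `0` and axis the unit vector `n`: the vectors
`ζ • n + w` with `w` orthogonal to `n`, `‖ζ‖ ≤ ρ / 2`, `|arg ζ| ≤ π / 4` and `‖w‖ ≤ (√3 / 2) ‖ζ‖`.
It contains the image of the scaled spike. -/
def horn (n : E) (ρ : ℝ) : Set E :=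
  {q | ‖⟪n, q⟫_ℂ‖ ≤ ρ / 2 ∧ |(⟪n, q⟫_ℂ).im| ≤ (⟪n, q⟫_ℂ).re ∧
    4 * ‖perp n q‖ ^ 2 ≤ 3 * ‖⟪n, q⟫_ℂ‖ ^ 2}

theorem isClosed_horn (n : E) (ρ : ℝ) : IsClosed (horn n ρ) := by
  have hinner : Continuous fun q : E => ⟪n, q⟫_ℂ := by fun_prop
  have hperp : Continuous (perp n) := (differentiable_perp n).continuous
  exact (isClosed_le hinner.norm continuous_const).inter
    ((isClosed_le (Complex.continuous_im.comp hinner).abs (Complex.continuous_re.comp hinner)).inter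
      (isClosed_le (continuous_const.mul (hperp.norm.pow 2))
        (continuous_const.mul (hinner.norm.pow 2))))

theorem zero_mem_horn (n : E) (hρ : 0 ≤ ρ) : (0 : E) ∈ horn n ρ := by
  have h : 0 ≤ ρ / 2 := by positivity
  refine ⟨?_, ?_, ?_⟩ <;> simp [perp, h]

theorem eq_zero_or_norm_sub_smul_lt_of_mem_horn (hn : ‖n‖ = 1) (hρ : 0 < ρ) {q : E}
    (hq : q ∈ horn n ρ) : q = 0 ∨ ‖q - (ρ : ℂ) • n‖ < ρ := by
  obtain ⟨hnorm, him, hperp⟩ := hq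
  obtain ⟨ζ, hζ⟩ : ∃ ζ, ζ = ⟪n, q⟫_ℂ := ⟨_, rfl⟩
  have hpyth := norm_sq_eq_norm_inner_sq_add_norm_perp_sq hn q
  rw [← hζ] at hnorm him hperp hpyth
  have hsq : ‖ζ‖ ^ 2 = ζ.re ^ 2 + ζ.im ^ 2 := by
    rw [← Complex.normSq_eq_norm_sq, Complex.normSq_apply, sq, sq]
  have himsq : ζ.im ^ 2 ≤ ζ.re ^ 2 := sq_le_sq.2 (him.trans (le_abs_self _))
  rcases ((abs_nonneg _).trans him).eq_or_lt with hre | hre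
  · left
    rw [← hre] at himsq hsq
    have hq0 : ‖q‖ ^ 2 ≤ 0 := by nlinarith
    exact norm_eq_zero.1 (sq_eq_zero_iff.1 (hq0.antisymm (sq_nonneg _)))
  · right
    have hdecomp : q - (ρ : ℂ) • n = (ζ - ρ) • n + perp n q := by
      rw [perp, ← hζ]
      module
    have hdist : ‖ζ - ρ‖ ^ 2 = (ζ.re - ρ) ^ 2 + ζ.im ^ 2 := by
      rw [← Complex.normSq_eq_norm_sq, Complex.normSq_apply, Complex.sub_re, Complex.sub_im,
        Complex.ofReal_re, Complex.ofReal_im]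
      ring
    have hζre : ‖ζ‖ ≤ 3 / 2 * ζ.re := le_of_sq_le_sq (by nlinarith) (by positivity)
    have hζsq : ‖ζ‖ ^ 2 ≤ ρ / 2 * (3 / 2 * ζ.re) := by
      rw [sq]
      gcongr
    refine lt_of_pow_lt_pow_left₀ 2 hρ.le ?_
    rw [hdecomp, norm_smul_add_sq hn _ (inner_perp hn q), hdist]
    nlinarith [mul_pos hρ hre]

theorem inner_smul_spike (hx : ‖x‖ = 1) (z : E) :
    ⟪M x, (η : ℂ) • spike M x β z⟫_ℂ = η * (spikeCoord x β z).sqrt⁻¹ := by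
  rw [inner_smul_right, inner_spike hx]

theorem perp_smul_spike (hx : ‖x‖ = 1) (z : E) :
    perp (M x) ((η : ℂ) • spike M x β z) =
      ((η : ℂ) * (2 * spikeCoord x β z)⁻¹) • M (perp x z) := by
  rw [perp, inner_smul_spike hx, spike]
  module

-- The relation `8 η² = β ρ²` matches the size `η / √β` of the scaled spike with the size `ρ` of
-- the horn.
theorem smul_spike_mem_horn (hx : ‖x‖ = 1) (hρ : 0 ≤ ρ) (hη : 0 ≤ η) (hβ : 0 < β) (hβ1 : β ≤ 1)
    (hβη : 8 * η ^ 2 = β * ρ ^ 2) {z : E} (hz : ‖z‖ < 1 + β / 2) :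
    (η : ℂ) • spike M x β z ∈ horn (M x) ρ := by
  have hre := lt_spikeCoord_re hx hz
  have hre0 : 0 < (spikeCoord x β z).re := (half_pos hβ).trans hre
  have hnorm := hre.trans_le (Complex.re_le_norm _)
  have hpos := (half_pos hβ).trans hnorm
  have hperp := norm_perp_sq_le hx hβ hβ1 hz
  have hsq : ‖(η : ℂ) * (spikeCoord x β z).sqrt⁻¹‖ ^ 2 = η ^ 2 / ‖spikeCoord x β z‖ := by
    rw [norm_mul, norm_inv, mul_pow, inv_pow, norm_sqrt_sq, Complex.norm_of_nonneg hη,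
      div_eq_mul_inv]
  refine ⟨?_, ?_, ?_⟩
  · rw [inner_smul_spike hx]
    refine le_of_sq_le_sq ?_ (by positivity)
    rw [hsq, div_le_iff₀ hpos]
    nlinarith [sq_nonneg ρ]
  · have := abs_sqrt_im_le hre0
    have := Complex.normSq_nonneg (spikeCoord x β z).sqrt
    rw [inner_smul_spike hx, Complex.re_ofReal_mul, Complex.im_ofReal_mul, Complex.inv_re,
      Complex.inv_im, abs_mul, abs_of_nonneg hη, abs_div, abs_neg, abs_of_nonneg this]
    gcongr
  · rw [perp_smul_spike hx, inner_smul_spike hx, hsq, norm_smul, M.norm_map, mul_pow, norm_mul,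
      norm_inv, norm_mul, Complex.norm_two, Complex.norm_of_nonneg hη]
    calc 4 * ((η * (2 * ‖spikeCoord x β z‖)⁻¹) ^ 2 * ‖perp x z‖ ^ 2)
        ≤ 4 * ((η * (2 * ‖spikeCoord x β z‖)⁻¹) ^ 2 * (3 * ‖spikeCoord x β z‖)) := by gcongr
      _ = 3 * (η ^ 2 / ‖spikeCoord x β z‖) := by
        field_simp
        ring

end Horn

/-! ### Adding a spike to an embedding -/

section AddSpike

theorem exists_norm_sub_sub_fderiv_le {E F : Type*} [NormedAddCommGroup E] [NormedSpace ℂ E]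
    [NormedAddCommGroup F] [NormedSpace ℂ F] {f : E → F} {x : E} {t e : ℝ} (ht : 0 < t)
    (hf : DifferentiableOn ℂ f (ball x t)) (he : 0 < e) :
    ∃ δ > 0, ∀ z ∈ ball x δ, ∀ w ∈ ball x δ,
      ‖f z - f w - fderiv ℂ f x (z - w)‖ ≤ e * ‖z - w‖ := by
  obtain ⟨D, hD⟩ : ∃ D, D = fderiv ℂ f x := ⟨_, rfl⟩
  have hfx : HasFDerivAt f D x :=
    hD ▸ (hf.differentiableAt (ball_mem_nhds x ht)).hasFDerivAt
  obtain ⟨δ', hδ', hlin⟩ := Metric.eventually_nhds_iff_ball.1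
    (hfx.isLittleO.def (show 0 < e / 4 by positivity))
  obtain ⟨δ, hδ⟩ : ∃ δ, δ = min t δ' := ⟨_, rfl⟩
  have hδ0 : 0 < δ := hδ ▸ lt_min ht hδ'
  have hδt : ball x δ ⊆ ball x t := ball_subset_ball (hδ.trans_le (min_le_left _ _))
  have hδδ' : ball x δ ⊆ ball x δ' := ball_subset_ball (hδ.trans_le (min_le_right _ _))
  have hd : DifferentiableOn ℂ (fun z => f z - f x - D (z - x)) (ball x δ) :=
    ((hf.mono hδt).sub_const _).sub (by fun_prop)
  have hb : ∀ z ∈ ball x δ, ‖f z - f x - D (z - x)‖ ≤ e / 4 * δ := fun z hz => by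
    refine (hlin z (hδδ' hz)).trans ?_
    rw [← dist_eq_norm]
    gcongr
    exact (mem_ball.1 hz).le
  refine ⟨δ / 2, half_pos hδ0, fun z hz w hw => ?_⟩
  have h := norm_image_sub_le_of_forall_norm_le (half_lt_self hδ0) hd hb
    (ball_subset_closedBall hz) (ball_subset_closedBall hw)
  rw [show 2 * (e / 4 * δ) / (δ - δ / 2) = e by field_simp; norm_num] at h
  rw [← hD, map_sub]
  simp only [map_sub] at h
  convert h using 2
  abel

theorem ExpandsOn.of_cover {E F : Type*} [NormedAddCommGroup E] [NormedAddCommGroup F]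
    {f : E → F} {c : ℝ} {s A B : Set E} (hA : ExpandsOn c f (s ∩ A)) (hB : ExpandsOn c f (s ∩ B))
    (hs : s ⊆ A ∪ B) (hcross : ∀ z ∈ s \ A, ∀ w ∈ s \ B, c * ‖z - w‖ ≤ ‖f z - f w‖) :
    ExpandsOn c f s := by
  intro z hz w hw
  by_cases hzA : z ∈ A
  · by_cases hwA : w ∈ A
    · exact hA ⟨hz, hzA⟩ ⟨hw, hwA⟩
    · by_cases hzB : z ∈ B
      · exact hB ⟨hz, hzB⟩ ⟨hw, (hs hw).resolve_left hwA⟩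
      · rw [norm_sub_rev z, norm_sub_rev (f z)]
        exact hcross w ⟨hw, hwA⟩ z ⟨hz, hzB⟩
  · by_cases hwB : w ∈ B
    · exact hB ⟨hz, (hs hz).resolve_left hzA⟩ ⟨hw, hwB⟩
    · exact hcross z ⟨hz, hzA⟩ w ⟨hw, hwB⟩

theorem eventually_mul_le (C : ℝ) {κ : ℝ} (hκ : 0 < κ) : ∀ᶠ η : ℝ in 𝓝[>] 0, η * C ≤ κ := by
  have h : Tendsto (fun η : ℝ => η * C) (𝓝[>] 0) (𝓝 0) := by
    have hcont : Continuous fun η : ℝ => η * C := by fun_prop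
    simpa only [zero_mul] using (hcont.tendsto 0).mono_left nhdsWithin_le_nhds
  exact h.eventually_le_const hκ

/-- The distance from the unit ball to the singularity of a spike of size `η` fitting into a horn of
size `ρ`. -/
noncomputable def spikeShift (ρ η : ℝ) : ℝ := 8 * η ^ 2 / ρ ^ 2

theorem spikeShift_pos {ρ η : ℝ} (hρ : 0 < ρ) (hη : 0 < η) : 0 < spikeShift ρ η := by
  unfold spikeShift
  positivity

theorem spikeShift_mul_sq {ρ : ℝ} (hρ : 0 < ρ) (η : ℝ) : 8 * η ^ 2 = spikeShift ρ η * ρ ^ 2 := by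
  rw [spikeShift, div_mul_cancel₀ _ (by positivity)]

theorem eventually_spikeShift_lt (ρ : ℝ) {κ : ℝ} (hκ : 0 < κ) :
    ∀ᶠ η in 𝓝[>] 0, spikeShift ρ η < κ := by
  have hcont : Continuous (spikeShift ρ) := by
    unfold spikeShift
    fun_prop
  have h : Tendsto (spikeShift ρ) (𝓝[>] 0) (𝓝 0) := by
    simpa [spikeShift] using (hcont.tendsto 0).mono_left nhdsWithin_le_nhds
  exact h.eventually_lt_const hκ

/-- A ball, slightly larger than the unit ball, on which the spike of size `η` is holomorphic. -/
def spikeDomain (E : Type*) [NormedAddCommGroup E] (ρ η : ℝ) : Set E :=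
  ball 0 (1 + spikeShift ρ η / 2)

section SpikeDomain

variable {E : Type*} [NormedAddCommGroup E] {r ρ η : ℝ}

theorem mem_spikeDomain {z : E} : z ∈ spikeDomain E ρ η ↔ ‖z‖ < 1 + spikeShift ρ η / 2 :=
  mem_ball_zero_iff

theorem closedBall_subset_spikeDomain (hρ : 0 < ρ) (hη : 0 < η) :
    closedBall 0 1 ⊆ spikeDomain E ρ η :=
  closedBall_subset_ball (by linarith [spikeShift_pos hρ hη])

theorem spikeDomain_subset_ball (h : spikeShift ρ η < r - 1) (hρ : 0 < ρ) (hη : 0 < η) :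
    spikeDomain E ρ η ⊆ ball 0 r :=
  ball_subset_ball (by linarith [spikeShift_pos hρ hη])

end SpikeDomain

variable {E : Type*} [NormedAddCommGroup E] [InnerProductSpace ℂ E]

/-- `f` is holomorphic and expands distances by a definite factor on a neighbourhood of the closed
ball of radius `r`. -/
def IsExpandingEmbedding {E : Type*} [NormedAddCommGroup E] [NormedSpace ℂ E] (f : E → E) (r : ℝ) :
    Prop :=
  ∃ t > r, ∃ c > 0, DifferentiableOn ℂ f (ball 0 t) ∧ ExpandsOn c f (ball 0 t)

/-- The map `f` with a spike of size `η` at `x` in the direction `M x` added to it. -/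
noncomputable def addSpike (f : E → E) (M : E ≃ₗᵢ[ℂ] E) (x : E) (ρ η : ℝ) (z : E) : E :=
  f z + (η : ℂ) • spike M x (spikeShift ρ η) z

variable {f : E → E} {M : E ≃ₗᵢ[ℂ] E} {x : E} {r c a c' ρ η : ℝ}

theorem addSpike_sub_addSpike (f : E → E) (M : E ≃ₗᵢ[ℂ] E) (x : E) (ρ η : ℝ) (z w : E) :
    addSpike f M x ρ η z - addSpike f M x ρ η w = (f z - f w) +
      (η : ℂ) • (spike M x (spikeShift ρ η) z - spike M x (spikeShift ρ η) w) := by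
  rw [addSpike, addSpike, smul_sub]
  abel

theorem differentiableOn_addSpike (hx : ‖x‖ = 1) (hρ : 0 < ρ) (hη : 0 < η)
    (hf : DifferentiableOn ℂ f (spikeDomain E ρ η)) :
    DifferentiableOn ℂ (addSpike f M x ρ η) (spikeDomain E ρ η) := fun z hz =>
  (hf z hz).add ((differentiableAt_spike ((half_pos (spikeShift_pos hρ hη)).trans
    (lt_spikeCoord_re hx (mem_spikeDomain.1 hz)))).differentiableWithinAt.const_smul _)

theorem norm_sub_sq_le_of_le_re_inner {β σ : ℝ} (hx : ‖x‖ = 1) (hβ : 0 ≤ β) (hβ1 : β ≤ 1) {z : E}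
    (hz : ‖z‖ < 1 + β / 2) (hσ : 1 - σ ≤ (⟪x, z⟫_ℂ).re) : ‖z - x‖ ^ 2 ≤ 2 * β + 2 * σ := by
  have h : ‖x - z‖ ^ 2 = ‖x‖ ^ 2 - 2 * (⟪x, z⟫_ℂ).re + ‖z‖ ^ 2 := norm_sub_sq (𝕜 := ℂ) x z
  rw [norm_sub_rev, h, hx]
  nlinarith [norm_nonneg z]

theorem exists_eventually_cap_subset_ball (hx : ‖x‖ = 1) (hρ : 0 < ρ) {δ : ℝ} (hδ : 0 < δ) :
    ∃ σ > 0, ∀ᶠ η in 𝓝[>] 0,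
      spikeDomain E ρ η ∩ {z | 1 - σ ≤ (⟪x, z⟫_ℂ).re} ⊆ ball x δ := by
  refine ⟨δ ^ 2 / 8, by positivity, ?_⟩
  filter_upwards [self_mem_nhdsWithin, eventually_spikeShift_lt ρ one_pos,
    eventually_spikeShift_lt ρ (show 0 < δ ^ 2 / 8 by positivity)]
    with η hη hβ1 hβδ z ⟨hz, hzσ⟩
  have h := norm_sub_sq_le_of_le_re_inner hx (spikeShift_pos hρ hη).le hβ1.le
    (mem_spikeDomain.1 hz) hzσ
  rw [mem_ball, dist_eq_norm]
  refine lt_of_pow_lt_pow_left₀ 2 hδ.le ?_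
  linarith [pow_pos hδ 2]

theorem IsAdapted.exists_eventually_expandsOn_near {t : ℝ}
    (h : IsAdapted (fderiv ℂ f x) M x a c') (hρ : 0 < ρ) (ht : 0 < t)
    (hf : DifferentiableOn ℂ f (ball x t)) :
    ∃ k > 0, ∃ S > 0, ∀ᶠ η in 𝓝[>] 0, ExpandsOn k (addSpike f M x ρ η)
      (spikeDomain E ρ η ∩ {z | 1 - S ≤ (⟪x, z⟫_ℂ).re}) := by
  obtain ⟨C, hC, hlower⟩ := h.exists_norm_sub_le
  obtain ⟨δ, hδ, hlin⟩ := exists_norm_sub_sub_fderiv_le ht hf (show 0 < 1 / (2 * C) by positivity)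
  obtain ⟨S, hS, hcap⟩ := exists_eventually_cap_subset_ball h.norm_eq_one hρ hδ
  refine ⟨1 / (2 * C), by positivity, S, hS, ?_⟩
  filter_upwards [self_mem_nhdsWithin, eventually_spikeShift_lt ρ one_pos, hcap]
    with η hη hβ1 hcap z hz w hw
  have hη : 0 < η := hη
  have hmodel := hlower _ (spikeShift_pos hρ hη) hβ1.le η hη z w (mem_spikeDomain.1 hz.1)
    (mem_spikeDomain.1 hw.1)
  have herr := hlin z (hcap hz) w (hcap hw)
  have hsplit := norm_sub_le (addSpike f M x ρ η z - addSpike f M x ρ η w)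
    (f z - f w - fderiv ℂ f x (z - w))
  rw [show addSpike f M x ρ η z - addSpike f M x ρ η w - (f z - f w - fderiv ℂ f x (z - w)) =
    fderiv ℂ f x (z - w) + (η : ℂ) • (spike M x (spikeShift ρ η) z -
      spike M x (spikeShift ρ η) w) by rw [addSpike_sub_addSpike]; abel] at hsplit
  have hle := hmodel.trans
    (mul_le_mul_of_nonneg_left (hsplit.trans (add_le_add_right herr _)) hC.le)
  rw [mul_add, ← mul_assoc, show C * (1 / (2 * C)) = 1 / 2 by field_simp] at hle
  rw [div_mul_eq_mul_div, div_le_iff₀ (by positivity)]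
  linarith

theorem eventually_norm_smul_spike_le (hx : ‖x‖ = 1) (hρ : 0 < ρ) {σ κ : ℝ} (hσ : 0 < σ)
    (hσ1 : σ ≤ 1) (hκ : 0 < κ) :
    ∀ᶠ η : ℝ in 𝓝[>] 0, ∀ z ∈ spikeDomain E ρ η, (⟪x, z⟫_ℂ).re ≤ 1 - σ →
      ‖(η : ℂ) • spike M x (spikeShift ρ η) z‖ ≤ κ := by
  filter_upwards [self_mem_nhdsWithin, eventually_spikeShift_lt ρ one_pos,
    eventually_mul_le (2 / σ) hκ] with η hη hβ1 hηκ z hz hzσ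
  have hη : 0 < η := hη
  have hβ := spikeShift_pos hρ hη
  rw [norm_smul, Complex.norm_of_nonneg hη.le]
  refine le_trans ?_ hηκ
  gcongr
  exact norm_spike_le hx hσ hσ1 (by linarith [mem_spikeDomain.1 hz])
    (by rw [spikeCoord_re]; linarith)

theorem ExpandsOn.eventually_addSpike_far (hx : ‖x‖ = 1) (hρ : 0 < ρ) (hr : 1 < r) (hc : 0 < c)
    (hexp : ExpandsOn c f (ball 0 r)) {σ : ℝ} (hσ : 0 < σ) (hσ1 : σ ≤ 1) :
    ∀ᶠ η in 𝓝[>] 0, ExpandsOn (c / 2) (addSpike f M x ρ η)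
      (spikeDomain E ρ η ∩ {z | (⟪x, z⟫_ℂ).re ≤ 1 - σ}) := by
  filter_upwards [self_mem_nhdsWithin, eventually_spikeShift_lt ρ one_pos,
    eventually_spikeShift_lt ρ (sub_pos.2 hr), eventually_mul_le (3 / σ ^ 2) (half_pos hc)]
    with η hη hβ1 hβr hηc
  have hη : 0 < η := hη
  have hβ := spikeShift_pos hρ hη
  have hre : ∀ z : E, (⟪x, z⟫_ℂ).re ≤ 1 - σ → σ ≤ (spikeCoord x (spikeShift ρ η) z).re :=
    fun z hz => by rw [spikeCoord_re]; linarith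
  refine ((hexp.mono (inter_subset_left.trans (spikeDomain_subset_ball hβr hρ hη))).of_lipschitz_sub
    (g := addSpike f M x ρ η) (c' := c / 2) fun z hz w hw => ?_).mono_const (by linarith)
  rw [addSpike, addSpike, add_sub_cancel_left, add_sub_cancel_left, ← smul_sub, norm_smul,
    Complex.norm_of_nonneg hη.le]
  calc η * ‖spike M x (spikeShift ρ η) z - spike M x (spikeShift ρ η) w‖
      ≤ η * (3 / σ ^ 2 * ‖z - w‖) := by
        gcongr
        exact norm_spike_sub_spike_le hx hσ hσ1 (by linarith [mem_spikeDomain.1 hw.1])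
          (hre z hz.2) (hre w hw.2)
    _ = η * (3 / σ ^ 2) * ‖z - w‖ := by ring
    _ ≤ c / 2 * ‖z - w‖ := by gcongr

theorem sub_notMem_horn {n z : E} (hn : ‖n‖ = 1) (hρ : 0 < ρ) (hne : f z ≠ f x)
    (hfρ : ρ ≤ ‖f z - f x - (ρ : ℂ) • n‖) : f z - f x ∉ horn n ρ := fun hmem =>
  (eq_zero_or_norm_sub_smul_lt_of_mem_horn hn hρ hmem).elim (fun h => hne (sub_eq_zero.1 h))
    hfρ.not_gt

theorem exists_le_norm_sub_of_mem_horn [FiniteDimensional ℂ E] {n : E} {S : ℝ} (hr : 1 < r)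
    (hx : ‖x‖ = 1) (hn : ‖n‖ = 1) (hf : ContinuousOn f (ball 0 r)) (hinj : InjOn f (ball 0 r))
    (hρ : 0 < ρ) (hfρ : ∀ z ∈ closedBall (0 : E) 1, ρ ≤ ‖f z - f x - (ρ : ℂ) • n‖) (hS : 0 < S) :
    ∃ d > 0, ∀ z : E, ‖z‖ < 1 + d → (⟪x, z⟫_ℂ).re ≤ 1 - S → ∀ q ∈ horn n ρ,
      d ≤ ‖f z - f x - q‖ := by
  have : ProperSpace E := FiniteDimensional.proper ℂ E
  obtain ⟨K, hK⟩ : ∃ K, K = closedBall (0 : E) ((1 + r) / 2) ∩ {z | (⟪x, z⟫_ℂ).re ≤ 1 - S} :=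
    ⟨_, rfl⟩
  have hKc : IsCompact K := hK ▸ (isCompact_closedBall _ _).inter_right
    (isClosed_le (Complex.continuous_re.comp (by fun_prop)) continuous_const)
  have hKr : K ⊆ ball 0 r :=
    hK ▸ inter_subset_left.trans (closedBall_subset_ball (by linarith))
  -- Vanishes only at points of the closed unit ball with values in the horn, and there are none.
  obtain ⟨φ, hφ⟩ : ∃ φ : E → ℝ,
    φ = fun z => max (‖z‖ - 1) 0 + infDist (f z - f x) (horn n ρ) := ⟨_, rfl⟩
  have hcont : ContinuousOn φ K := by
    rw [hφ]
    exact ContinuousOn.add (by fun_prop) ((continuous_infDist_pt _).comp_continuousOn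
      ((hf.mono hKr).sub continuousOn_const))
  have hpos : ∀ z ∈ K, 0 < φ z := fun z hz => by
    rw [hφ]
    rcases lt_or_ge 1 ‖z‖ with hz1 | hz1
    · exact add_pos_of_pos_of_nonneg (lt_max_of_lt_left (by linarith)) infDist_nonneg
    · refine add_pos_of_nonneg_of_pos (le_max_right _ _)
        (((isClosed_horn n ρ).notMem_iff_infDist_pos ⟨0, zero_mem_horn n hρ.le⟩).1
          (sub_notMem_horn hn hρ (fun heq => ?_) (hfρ z (mem_closedBall_zero_iff.2 hz1))))
      have hzx : z = x := hinj (hKr hz) (mem_ball_zero_iff.2 (hx.trans_lt hr)) heq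
      have hzS : (⟪x, z⟫_ℂ).re ≤ 1 - S := (hK.subset hz).2
      rw [hzx, inner_self_of_norm_eq_one hx, Complex.one_re] at hzS
      linarith
  obtain ⟨b, hb, hbK⟩ := hKc.exists_forall_le' hcont hpos
  refine ⟨min (b / 2) ((r - 1) / 2), lt_min (half_pos hb) (by linarith), fun z hz hzS q hq => ?_⟩
  have hzb : ‖z‖ - 1 < b / 2 := by linarith [min_le_left (b / 2) ((r - 1) / 2)]
  have hle := hbK z (hK ▸ ⟨mem_closedBall_zero_iff.2
    (by linarith [min_le_right (b / 2) ((r - 1) / 2)]), hzS⟩)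
  have hdist := infDist_le_dist_of_mem (x := f z - f x) hq
  have hmax : max (‖z‖ - 1) 0 ≤ b / 2 := max_le hzb.le (by positivity)
  rw [dist_eq_norm] at hdist
  rw [hφ] at hle
  exact (min_le_left _ _).trans (by linarith)

theorem exists_eventually_norm_sub_lt (hx : ‖x‖ = 1) (hρ : 0 < ρ) (hf : ContinuousAt f x) {κ : ℝ}
    (hκ : 0 < κ) :
    ∃ σ > 0, ∀ᶠ η in 𝓝[>] 0, ∀ z ∈ spikeDomain E ρ η, 1 - σ ≤ (⟪x, z⟫_ℂ).re →
      ‖f z - f x‖ < κ := by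
  obtain ⟨δ, hδ, hball⟩ := Metric.continuousAt_iff.1 hf κ hκ
  obtain ⟨σ, hσ, hcap⟩ := exists_eventually_cap_subset_ball hx hρ hδ
  refine ⟨σ, hσ, ?_⟩
  filter_upwards [hcap] with η hcap z hz hzσ
  rw [← dist_eq_norm]
  exact hball (hcap ⟨hz, hzσ⟩)

theorem eventually_smul_spike_mem_horn (hx : ‖x‖ = 1) (hρ : 0 < ρ) :
    ∀ᶠ η : ℝ in 𝓝[>] 0, ∀ z ∈ spikeDomain E ρ η,
      (η : ℂ) • spike M x (spikeShift ρ η) z ∈ horn (M x) ρ := by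
  filter_upwards [self_mem_nhdsWithin, eventually_spikeShift_lt ρ one_pos] with η hη hβ1 z hz
  exact smul_spike_mem_horn hx hρ.le (le_of_lt hη) (spikeShift_pos hρ hη) hβ1.le
    (spikeShift_mul_sq hρ η) (mem_spikeDomain.1 hz)

-- The spike lies in the horn, so it stays away from the rest of the image of `f`.
theorem exists_eventually_mul_norm_sub_le_of_far_of_near [FiniteDimensional ℂ E] (hr : 1 < r)
    (hx : ‖x‖ = 1) (hf : DifferentiableOn ℂ f (ball 0 r)) (hinj : InjOn f (ball 0 r)) (hρ : 0 < ρ)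
    (hfρ : ∀ z ∈ closedBall (0 : E) 1, ρ ≤ ‖f z - f x - (ρ : ℂ) • M x‖) {S : ℝ} (hS : 0 < S) :
    ∃ k > 0, ∃ σ > 0, σ ≤ S ∧ σ ≤ 1 ∧ ∀ᶠ η in 𝓝[>] 0, ∀ z ∈ spikeDomain E ρ η,
      ∀ w ∈ spikeDomain E ρ η, (⟪x, z⟫_ℂ).re ≤ 1 - S → 1 - σ ≤ (⟪x, w⟫_ℂ).re →
        k * ‖z - w‖ ≤ ‖addSpike f M x ρ η z - addSpike f M x ρ η w‖ := by
  obtain ⟨d, hd, hhorn⟩ := exists_le_norm_sub_of_mem_horn hr hx ((M.norm_map x).trans hx)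
    hf.continuousOn hinj hρ hfρ hS
  obtain ⟨σ', hσ', hclose⟩ := exists_eventually_norm_sub_lt hx hρ
    (hf.differentiableAt (isOpen_ball.mem_nhds (mem_ball_zero_iff.2 (hx.trans_lt hr)))).continuousAt
    (show 0 < d / 4 by positivity)
  obtain ⟨σ, hσ⟩ : ∃ σ, σ = min σ' (min S 1) := ⟨_, rfl⟩
  have hσ0 : 0 < σ := hσ ▸ lt_min hσ' (lt_min hS one_pos)
  have hσσ' : σ ≤ σ' := hσ.trans_le (min_le_left _ _)
  have hσS : σ ≤ S := hσ.trans_le ((min_le_right _ _).trans (min_le_left _ _))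
  have hσ1 : σ ≤ 1 := hσ.trans_le ((min_le_right _ _).trans (min_le_right _ _))
  refine ⟨d / 8, by positivity, σ, hσ0, hσS, hσ1, ?_⟩
  filter_upwards [eventually_spikeShift_lt ρ one_pos, eventually_spikeShift_lt ρ hd, hclose,
    eventually_smul_spike_mem_horn (M := M) hx hρ,
    eventually_norm_smul_spike_le (M := M) hx hρ hσ0 hσ1 (show 0 < d / 4 by positivity)]
    with η hβ1 hβd hclose hmem hsmall z hz w hw hzS hwσ
  have hz1 := mem_spikeDomain.1 hz
  have hw1 := mem_spikeDomain.1 hw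
  have hgap := hhorn z (by linarith) hzS _ (hmem w hw)
  have hzspike := hsmall z hz (by linarith)
  have hfw := hclose w hw (by linarith)
  have hle : d / 2 ≤ ‖addSpike f M x ρ η z - addSpike f M x ρ η w‖ := by
    rw [show f z - f x - (η : ℂ) • spike M x (spikeShift ρ η) w =
      (addSpike f M x ρ η z - addSpike f M x ρ η w) +
        ((f w - f x) - (η : ℂ) • spike M x (spikeShift ρ η) z) by
      rw [addSpike, addSpike]; abel] at hgap
    linarith [norm_add_le (addSpike f M x ρ η z - addSpike f M x ρ η w)
      ((f w - f x) - (η : ℂ) • spike M x (spikeShift ρ η) z),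
      norm_sub_le (f w - f x) ((η : ℂ) • spike M x (spikeShift ρ η) z)]
  have hzw : ‖z - w‖ ≤ 4 := by linarith [norm_sub_le z w]
  calc d / 8 * ‖z - w‖ ≤ d / 8 * 4 := by gcongr
    _ = d / 2 := by ring
    _ ≤ _ := hle

theorem IsAdapted.eventually_isExpandingEmbedding_addSpike [FiniteDimensional ℂ E]
    (h : IsAdapted (fderiv ℂ f x) M x a c') (hr : 1 < r) (hc : 0 < c)
    (hf : DifferentiableOn ℂ f (ball 0 r)) (hexp : ExpandsOn c f (ball 0 r)) (hρ : 0 < ρ)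
    (hfρ : ∀ z ∈ closedBall (0 : E) 1, ρ ≤ ‖f z - f x - (ρ : ℂ) • M x‖) :
    ∀ᶠ η in 𝓝[>] 0, IsExpandingEmbedding (addSpike f M x ρ η) 1 := by
  have hx := h.norm_eq_one
  obtain ⟨k, hk, S, hS, hnear⟩ := h.exists_eventually_expandsOn_near hρ (sub_pos.2 hr)
    (hf.mono (ball_sub_subset_ball (mem_closedBall_zero_iff.2 hx.le)))
  obtain ⟨k', hk', σ, hσ, hσS, hσ1, hcross⟩ := exists_eventually_mul_norm_sub_le_of_far_of_near
    (M := M) hr hx hf (hexp.injOn hc) hρ hfρ hS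
  filter_upwards [self_mem_nhdsWithin, eventually_spikeShift_lt ρ (sub_pos.2 hr), hnear, hcross,
    hexp.eventually_addSpike_far (M := M) hx hρ hr hc hσ hσ1] with η hη hβr hnear hcross hfar
  have hη : 0 < η := hη
  refine ⟨1 + spikeShift ρ η / 2, by linarith [spikeShift_pos hρ hη],
    min k (min (c / 2) k'), by positivity, differentiableOn_addSpike hx hρ hη
      (hf.mono (spikeDomain_subset_ball hβr hρ hη)), ?_⟩
  refine ExpandsOn.of_cover (hnear.mono_const (min_le_left _ _))
    (hfar.mono_const ((min_le_right _ _).trans (min_le_left _ _))) (fun z _ => ?_)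
    fun z hz w hw => ?_
  · exact (le_total (1 - S) (⟪x, z⟫_ℂ).re).imp id fun hzS => hzS.trans (by linarith)
  · exact (mul_le_mul_of_nonneg_right ((min_le_right _ _).trans (min_le_right _ _))
      (norm_nonneg _)).trans (hcross z hz.1 w hw.1 (le_of_not_ge hz.2) (le_of_not_ge hw.2))

theorem eventually_norm_addSpike_sub_le (hx : ‖x‖ = 1) (hρ : 0 < ρ) {ε : ℝ} (hε : 0 < ε) :
    ∀ᶠ η in 𝓝[>] 0, ∀ z, ‖z‖ ≤ 1 - ε → ‖addSpike f M x ρ η z - f z‖ ≤ ε := by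
  filter_upwards [self_mem_nhdsWithin, eventually_norm_smul_spike_le (M := M) hx hρ
    (lt_min hε one_pos) (min_le_right ε 1) hε] with η hη hsmall z hz
  rw [addSpike, add_sub_cancel_left]
  refine hsmall z (closedBall_subset_spikeDomain hρ hη
    (mem_closedBall_zero_iff.2 (by linarith))) ?_
  linarith [(Complex.re_le_norm _).trans (norm_inner_le_of_norm_eq_one hx z), min_le_left ε 1]

theorem eventually_exists_norm_addSpike_sub_le (hx : ‖x‖ = 1) (hρ : 0 < ρ) (hf : ContinuousAt f x)
    {ε : ℝ} (hε : 0 < ε) :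
    ∀ᶠ η in 𝓝[>] 0, ∀ z ∈ closedBall (0 : E) 1,
      ∃ q ∈ f '' closedBall 0 1 ∪ closedBall (f x + (ρ : ℂ) • M x) ρ,
        ‖addSpike f M x ρ η z - q‖ ≤ ε := by
  have hMx : ‖M x‖ = 1 := (M.norm_map x).trans hx
  obtain ⟨σ, hσ, hclose⟩ := exists_eventually_norm_sub_lt hx hρ hf hε
  filter_upwards [self_mem_nhdsWithin, hclose, eventually_smul_spike_mem_horn (M := M) hx hρ,
    eventually_norm_smul_spike_le (M := M) hx hρ (lt_min hσ one_pos) (min_le_right σ 1) hε]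
    with η hη hclose hmem hsmall z hz
  have hzd := closedBall_subset_spikeDomain hρ hη hz
  rcases le_total (⟪x, z⟫_ℂ).re (1 - min σ 1) with hzσ | hzσ
  · refine ⟨f z, Or.inl (mem_image_of_mem f hz), ?_⟩
    rw [addSpike, add_sub_cancel_left]
    exact hsmall z hzd hzσ
  · refine ⟨f x + (η : ℂ) • spike M x (spikeShift ρ η) z, Or.inr ?_, ?_⟩
    · rw [mem_closedBall, dist_eq_norm, add_sub_add_left_eq_sub]
      rcases eq_zero_or_norm_sub_smul_lt_of_mem_horn hMx hρ (hmem z hzd) with h0 | hlt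
      · rw [h0, zero_sub, norm_neg, norm_smul, hMx, mul_one, Complex.norm_of_nonneg hρ.le]
      · exact hlt.le
    · rw [addSpike, add_sub_add_right_eq_sub]
      exact (hclose z hzd (by linarith [min_le_left σ 1])).le

end AddSpike

/-! ### Covering part of the touching ball -/

section SpikeInverse

theorem re_pos_and_inv_sq_bounds {k : ℂ} (hk : ‖k - 1‖ ≤ 1 / 10) :
    0 < k.re ∧ 1 / 2 ≤ ((k ^ 2)⁻¹).re ∧ ‖(k ^ 2)⁻¹‖ ≤ 5 / 4 := by
  have hre := (Complex.abs_re_le_norm _).trans hk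
  have him := (Complex.abs_im_le_norm _).trans hk
  rw [Complex.sub_re, Complex.one_re, abs_le] at hre
  rw [Complex.sub_im, Complex.one_im, sub_zero, abs_le] at him
  have hlower : 9 / 10 ≤ ‖k‖ := by
    have := norm_sub_le k (k - 1)
    rw [sub_sub_cancel, norm_one] at this
    linarith
  have hupper : ‖k‖ ≤ 11 / 10 := by
    have := norm_add_le (k - 1) 1
    rw [norm_one, sub_add_cancel] at this
    linarith
  have hlower2 : 81 / 100 ≤ ‖k ^ 2‖ := by rw [norm_pow]; nlinarith
  have hupper2 : ‖k ^ 2‖ ≤ 121 / 100 := by rw [norm_pow]; nlinarith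
  refine ⟨by linarith, ?_, ?_⟩
  · rw [Complex.inv_re, Complex.normSq_eq_norm_sq, le_div_iff₀ (by positivity), sq k,
      Complex.mul_re, ← sq k]
    nlinarith
  · rw [norm_inv, inv_le_comm₀ (by positivity) (by norm_num)]
    linarith

variable {E : Type*} [NormedAddCommGroup E] [InnerProductSpace ℂ E]

/-- The square root of the spike coordinate of `spikeInv M x ρ η v`, for `n = M x`; it solves
`η / s = ρ / 6 + ⟪n, v⟫`, the right side being the component along `n` of the value at that
point. -/
noncomputable def spikeInvSqrt (n : E) (ρ η : ℝ) (v : E) : ℂ := 6 * η / (ρ + 6 * ⟪n, v⟫_ℂ)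

/-- A right inverse of the spike of size `η`: near `v = 0`, the point of the unit ball at which the
spike takes the value `(ρ / 6) • M x + v`. -/
noncomputable def spikeInv (M : E ≃ₗᵢ[ℂ] E) (x : E) (ρ η : ℝ) (v : E) : E :=
  (1 + spikeShift ρ η - spikeInvSqrt (M x) ρ η v ^ 2) • x +
    (2 * spikeInvSqrt (M x) ρ η v ^ 2 / η) • M.symm (perp (M x) v)

variable {M : E ≃ₗᵢ[ℂ] E} {n x v : E} {ρ η : ℝ}

theorem spikeInvSqrt_eq (hρ : 0 < ρ) (n : E) (η : ℝ) (v : E) :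
    spikeInvSqrt n ρ η v = ((6 * η / ρ : ℝ) : ℂ) * (1 + ((6 / ρ : ℝ) : ℂ) * ⟪n, v⟫_ℂ)⁻¹ := by
  have hρc : (ρ : ℂ) ≠ 0 := Complex.ofReal_ne_zero.2 hρ.ne'
  rw [spikeInvSqrt, show (ρ : ℂ) + 6 * ⟪n, v⟫_ℂ = ρ * (1 + ((6 / ρ : ℝ) : ℂ) * ⟪n, v⟫_ℂ) by
    push_cast; field_simp, div_mul_eq_div_div, div_eq_mul_inv]
  push_cast
  rfl

theorem spikeInvSqrt_sq_eq (hρ : 0 < ρ) (n : E) (η : ℝ) (v : E) :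
    spikeInvSqrt n ρ η v ^ 2 =
      ((9 / 2 * spikeShift ρ η : ℝ) : ℂ) * ((1 + ((6 / ρ : ℝ) : ℂ) * ⟪n, v⟫_ℂ) ^ 2)⁻¹ := by
  rw [spikeInvSqrt_eq hρ, mul_pow, inv_pow, ← Complex.ofReal_pow, spikeShift]
  congr 2
  ring

theorem norm_normalized_inner_sub_one_le (hn : ‖n‖ = 1) (hρ : 0 < ρ) (hv : ‖v‖ < ρ / 60) :
    ‖(1 + ((6 / ρ : ℝ) : ℂ) * ⟪n, v⟫_ℂ) - 1‖ ≤ 1 / 10 := by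
  rw [add_sub_cancel_left, norm_mul, Complex.norm_of_nonneg (by positivity)]
  calc 6 / ρ * ‖⟪n, v⟫_ℂ‖ ≤ 6 / ρ * (ρ / 60) := by
        gcongr
        exact (norm_inner_le_of_norm_eq_one hn v).trans hv.le
    _ = 1 / 10 := by field_simp; norm_num

theorem spikeInvSqrt_re_pos (hn : ‖n‖ = 1) (hρ : 0 < ρ) (hη : 0 < η) (hv : ‖v‖ < ρ / 60) :
    0 < (spikeInvSqrt n ρ η v).re := by
  have hre := (re_pos_and_inv_sq_bounds (norm_normalized_inner_sub_one_le hn hρ hv)).1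
  rw [spikeInvSqrt_eq hρ, Complex.re_ofReal_mul, Complex.inv_re]
  have hsq : 0 < Complex.normSq (1 + ((6 / ρ : ℝ) : ℂ) * ⟪n, v⟫_ℂ) :=
    Complex.normSq_pos.2 fun h0 => hre.ne' (by rw [h0, Complex.zero_re])
  positivity

theorem le_spikeInvSqrt_sq_re (hn : ‖n‖ = 1) (hρ : 0 < ρ) (hη : 0 < η) (hv : ‖v‖ < ρ / 60) :
    9 / 4 * spikeShift ρ η ≤ (spikeInvSqrt n ρ η v ^ 2).re := by
  have hre := (re_pos_and_inv_sq_bounds (norm_normalized_inner_sub_one_le hn hρ hv)).2.1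
  have hβ := spikeShift_pos hρ hη
  rw [spikeInvSqrt_sq_eq hρ, Complex.re_ofReal_mul]
  nlinarith

theorem norm_spikeInvSqrt_sq_le (hn : ‖n‖ = 1) (hρ : 0 < ρ) (hη : 0 < η) (hv : ‖v‖ < ρ / 60) :
    ‖spikeInvSqrt n ρ η v ^ 2‖ ≤ 45 / 8 * spikeShift ρ η := by
  have hnorm := (re_pos_and_inv_sq_bounds (norm_normalized_inner_sub_one_le hn hρ hv)).2.2
  have hβ := spikeShift_pos hρ hη
  rw [spikeInvSqrt_sq_eq hρ, norm_mul, Complex.norm_of_nonneg (by positivity)]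
  nlinarith

theorem inner_spikeInv (hx : ‖x‖ = 1) (v : E) :
    ⟪x, spikeInv M x ρ η v⟫_ℂ = 1 + spikeShift ρ η - spikeInvSqrt (M x) ρ η v ^ 2 := by
  have hperp : ⟪x, M.symm (perp (M x) v)⟫_ℂ = 0 := by
    rw [← M.inner_map_map, M.apply_symm_apply]
    exact inner_perp ((M.norm_map x).trans hx) v
  rw [spikeInv, inner_add_right, inner_smul_right, inner_smul_right, hperp,
    inner_self_of_norm_eq_one hx, mul_one, mul_zero, add_zero]

theorem spikeCoord_spikeInv (hx : ‖x‖ = 1) (v : E) :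
    spikeCoord x (spikeShift ρ η) (spikeInv M x ρ η v) = spikeInvSqrt (M x) ρ η v ^ 2 := by
  rw [spikeCoord, inner_spikeInv hx, sub_sub_cancel]

theorem perp_spikeInv (hx : ‖x‖ = 1) (v : E) :
    perp x (spikeInv M x ρ η v) =
      (2 * spikeInvSqrt (M x) ρ η v ^ 2 / η) • M.symm (perp (M x) v) := by
  rw [perp, inner_spikeInv hx, spikeInv, add_sub_cancel_left]

theorem smul_spike_spikeInv (hx : ‖x‖ = 1) (hρ : 0 < ρ) (hη : 0 < η) (hv : ‖v‖ < ρ / 60) :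
    (η : ℂ) • spike M x (spikeShift ρ η) (spikeInv M x ρ η v) = ((ρ / 6 : ℝ) : ℂ) • M x + v := by
  have hMx : ‖M x‖ = 1 := (M.norm_map x).trans hx
  have hre := spikeInvSqrt_re_pos hMx hρ hη hv
  have hs0 : spikeInvSqrt (M x) ρ η v ≠ 0 := fun h0 => hre.ne' (by rw [h0, Complex.zero_re])
  have hsqre : 0 < (spikeInvSqrt (M x) ρ η v ^ 2).re :=
    lt_of_lt_of_le (by linarith [spikeShift_pos hρ hη]) (le_spikeInvSqrt_sq_re hMx hρ hη hv)
  have hη0 : (η : ℂ) ≠ 0 := Complex.ofReal_ne_zero.2 hη.ne'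
  have hnormal : (η : ℂ) * (spikeInvSqrt (M x) ρ η v)⁻¹ = ((ρ / 6 : ℝ) : ℂ) + ⟪M x, v⟫_ℂ := by
    rw [spikeInvSqrt, inv_div]
    push_cast
    field_simp
  have htangential : (η : ℂ) * (2 * spikeInvSqrt (M x) ρ η v ^ 2)⁻¹ *
      (2 * spikeInvSqrt (M x) ρ η v ^ 2 / η) = 1 := by field_simp
  rw [spike, spikeCoord_spikeInv hx, perp_spikeInv hx, sqrt_eq_of_sq_eq hre hsqre rfl, map_smul,
    M.apply_symm_apply, smul_add, smul_smul, smul_smul, smul_smul, hnormal, htangential,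
    one_smul, perp]
  module

theorem norm_perp_spikeInv_sq_le (hx : ‖x‖ = 1) (hρ : 0 < ρ) (hη : 0 < η) (hv : ‖v‖ < ρ / 60) :
    ‖perp x (spikeInv M x ρ η v)‖ ^ 2 ≤ 3 / 10 * spikeShift ρ η := by
  have hMx : ‖M x‖ = 1 := (M.norm_map x).trans hx
  have hβ := spikeShift_pos hρ hη
  have hη2 : η ^ 2 = spikeShift ρ η * ρ ^ 2 / 8 := by linarith [spikeShift_mul_sq hρ η]
  have hs := norm_spikeInvSqrt_sq_le hMx hρ hη hv
  have hperp : ‖perp (M x) v‖ ≤ ρ / 60 := (norm_perp_le hMx v).trans hv.le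
  rw [perp_spikeInv hx, norm_smul, M.symm.norm_map, norm_div, norm_mul, Complex.norm_two,
    Complex.norm_of_nonneg hη.le, mul_pow, div_pow, hη2]
  calc (2 * ‖spikeInvSqrt (M x) ρ η v ^ 2‖) ^ 2 / (spikeShift ρ η * ρ ^ 2 / 8) *
        ‖perp (M x) v‖ ^ 2
      ≤ (2 * (45 / 8 * spikeShift ρ η)) ^ 2 / (spikeShift ρ η * ρ ^ 2 / 8) * (ρ / 60) ^ 2 := by
        gcongr
    _ = 9 / 32 * spikeShift ρ η := by field_simp; norm_num
    _ ≤ 3 / 10 * spikeShift ρ η := by linarith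

theorem norm_spikeInv_lt_one (hx : ‖x‖ = 1) (hρ : 0 < ρ) (hη : 0 < η)
    (hβ1 : spikeShift ρ η < 1 / 20) (hv : ‖v‖ < ρ / 60) : ‖spikeInv M x ρ η v‖ < 1 := by
  have hMx : ‖M x‖ = 1 := (M.norm_map x).trans hx
  have hβ := spikeShift_pos hρ hη
  have hperp := norm_perp_spikeInv_sq_le (M := M) hx hρ hη hv
  have hre := le_spikeInvSqrt_sq_re hMx hρ hη hv
  have hsq := pow_le_pow_left₀ (norm_nonneg _) (norm_spikeInvSqrt_sq_le hMx hρ hη hv) 2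
  have hpyth := norm_sq_eq_norm_inner_sq_add_norm_perp_sq hx (spikeInv M x ρ η v)
  have hinner : ∀ u : ℂ, ‖(1 + spikeShift ρ η : ℂ) - u‖ ^ 2 =
      (1 + spikeShift ρ η) ^ 2 - 2 * (1 + spikeShift ρ η) * u.re + ‖u‖ ^ 2 := fun u => by
    simp only [← Complex.normSq_eq_norm_sq, Complex.normSq_apply, Complex.sub_re, Complex.add_re,
      Complex.one_re, Complex.ofReal_re, Complex.sub_im, Complex.add_im, Complex.one_im,
      Complex.ofReal_im]
    ring
  rw [inner_spikeInv hx, hinner] at hpyth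
  refine lt_of_pow_lt_pow_left₀ 2 zero_le_one ?_
  nlinarith

theorem norm_spikeInv_sub_sq_le (hx : ‖x‖ = 1) (hρ : 0 < ρ) (hη : 0 < η)
    (hβ1 : spikeShift ρ η < 1 / 20) (hv : ‖v‖ < ρ / 60) :
    ‖spikeInv M x ρ η v - x‖ ^ 2 ≤ 10 * spikeShift ρ η := by
  have hs := (Complex.re_le_norm _).trans
    (norm_spikeInvSqrt_sq_le ((M.norm_map x).trans hx) hρ hη hv)
  have hβ := spikeShift_pos hρ hη
  have h := norm_sub_sq_le_of_le_re_inner (σ := 5 * spikeShift ρ η) hx le_rfl zero_le_one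
    ((norm_spikeInv_lt_one (M := M) hx hρ hη hβ1 hv).trans_eq (by norm_num)) (by
      rw [inner_spikeInv hx, Complex.sub_re, Complex.add_re, Complex.one_re, Complex.ofReal_re]
      linarith)
  linarith

theorem differentiableAt_spikeInv (hx : ‖x‖ = 1) (hρ : 0 < ρ) (hη : 0 < η)
    (hv : ‖v‖ < ρ / 60) : DifferentiableAt ℂ (spikeInv M x ρ η) v := by
  have hre := spikeInvSqrt_re_pos ((M.norm_map x).trans hx) hρ hη hv
  have hne : (ρ : ℂ) + 6 * ⟪M x, v⟫_ℂ ≠ 0 := fun h0 =>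
    hre.ne' (by rw [spikeInvSqrt, h0, div_zero, Complex.zero_re])
  have hden : DifferentiableAt ℂ (fun v => (ρ : ℂ) + 6 * ⟪M x, v⟫_ℂ) v :=
    ((innerSL ℂ (M x)).differentiableAt.const_mul 6).const_add _
  have hsq : DifferentiableAt ℂ (fun v => spikeInvSqrt (M x) ρ η v ^ 2) v :=
    ((hden.fun_inv hne).const_mul (6 * η : ℂ)).fun_pow 2
  have hperp : DifferentiableAt ℂ (fun v => M.symm (perp (M x) v)) v :=
    ((M.symm : E ≃L[ℂ] E) : E →L[ℂ] E).differentiableAt.comp v (differentiable_perp (M x) v)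
  exact ((hsq.const_sub (1 + spikeShift ρ η : ℂ)).smul_const x).fun_add
    (((hsq.const_mul 2).mul_const ((η : ℂ)⁻¹)).fun_smul hperp)

theorem eventually_closedBall_subset_image_addSpike [FiniteDimensional ℂ E] {f : E → E}
    (hf : DifferentiableOn ℂ f (ball 0 1)) (hfx : ContinuousAt f x) (hx : ‖x‖ = 1) (hρ : 0 < ρ) :
    ∀ᶠ η in 𝓝[>] 0, closedBall (f x + ((ρ / 6 : ℝ) : ℂ) • M x) (ρ / 120) ⊆
      addSpike f M x ρ η '' closedBall 0 1 := by
  obtain ⟨q, hq⟩ : ∃ q, q = f x + ((ρ / 6 : ℝ) : ℂ) • M x := ⟨_, rfl⟩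
  obtain ⟨e, he, hstab⟩ := exists_stableOn (f := fun v => q + v) (r := ρ / 120) (t := ρ / 60)
    (by linarith) one_pos (by fun_prop) (fun z _ w _ => by simp) isOpen_univ (subset_univ _)
  obtain ⟨δ, hδ, hball⟩ := Metric.continuousAt_iff.1 hfx e he
  filter_upwards [self_mem_nhdsWithin,
    eventually_spikeShift_lt ρ (show (0 : ℝ) < 1 / 20 by norm_num),
    eventually_spikeShift_lt ρ (show 0 < δ ^ 2 / 10 by positivity)] with η hη hβ1 hβδ
  have hlt : ∀ v ∈ ball (0 : E) (ρ / 60), ‖spikeInv M x ρ η v‖ < 1 := fun v hv =>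
    norm_spikeInv_lt_one hx hρ hη hβ1 (mem_ball_zero_iff.1 hv)
  have hcomp : ∀ v ∈ ball (0 : E) (ρ / 60), addSpike f M x ρ η (spikeInv M x ρ η v) =
      q + v + (f (spikeInv M x ρ η v) - f x) := fun v hv => by
    rw [addSpike, smul_spike_spikeInv hx hρ hη (mem_ball_zero_iff.1 hv), hq]
    abel
  have hclose : ∀ v ∈ ball (0 : E) (ρ / 60), ‖f (spikeInv M x ρ η v) - f x‖ ≤ e := fun v hv => by
    rw [← dist_eq_norm]
    refine (hball ?_).le
    rw [dist_eq_norm]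
    refine lt_of_pow_lt_pow_left₀ 2 hδ.le ?_
    linarith [norm_spikeInv_sub_sq_le (M := M) hx hρ hη hβ1 (mem_ball_zero_iff.1 hv)]
  have hdiff : DifferentiableOn ℂ (fun v => q + v + (f (spikeInv M x ρ η v) - f x))
      (ball 0 (ρ / 60)) := fun v hv =>
    ((differentiableAt_id.const_add q).add (((hf.differentiableAt (isOpen_ball.mem_nhds
      (mem_ball_zero_iff.2 (hlt v hv)))).comp v (differentiableAt_spikeInv hx hρ hη
        (mem_ball_zero_iff.1 hv))).sub_const _)).differentiableWithinAt
  obtain ⟨-, -, hcov⟩ := hstab _ hdiff fun v hv => by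
    rw [add_sub_cancel_left]
    exact hclose v hv
  intro p hp
  obtain ⟨v, hv, rfl⟩ := hcov ⟨p - q, by rwa [mem_closedBall_zero_iff, ← dist_eq_norm, hq],
    add_sub_cancel q p⟩
  exact ⟨spikeInv M x ρ η v, mem_closedBall_zero_iff.2 (hlt v hv).le, hcomp v hv⟩

end SpikeInverse

/-! ### One step of the construction -/

section Extension

theorem infDist_le_infDist_add_of_subset_thickening {X : Type*} [PseudoMetricSpace X]
    {s t : Set X} {δ : ℝ} (hs : s.Nonempty) (hst : s ⊆ thickening δ t) (y : X) :
    infDist y t ≤ infDist y s + δ := by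
  suffices infDist y t - δ ≤ infDist y s by linarith
  refine (le_infDist hs).2 fun p hp => ?_
  obtain ⟨p', hp', hpp'⟩ := mem_thickening_iff.1 (hst hp)
  linarith [infDist_le_dist_of_mem (x := y) hp', dist_triangle y p p']

theorem thickening_union_subset_thickening {X : Type*} [PseudoMetricSpace X] {s s' t t' : Set X}
    {δ ε : ℝ} (hδ : 0 < δ) (hs : s ⊆ thickening δ s') (ht : t ⊆ t') (hε : δ + δ ≤ ε) :
    thickening δ (s ∪ t) ⊆ thickening ε (s' ∪ t') := by
  have hst : s ∪ t ⊆ thickening δ (s' ∪ t') :=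
    union_subset (hs.trans (thickening_subset_of_subset _ subset_union_left))
      (ht.trans (subset_union_right.trans (self_subset_thickening hδ _)))
  exact ((thickening_subset_of_subset _ hst).trans (thickening_thickening_subset _ _ _)).trans
    (thickening_mono hε _)

theorem image_comp_smul_closedBall {E F : Type*} [NormedAddCommGroup E] [NormedSpace ℂ E]
    (f : E → F) {s : ℝ} (hs : 0 < s) (r : ℝ) :
    (fun z => f ((s : ℂ) • z)) '' closedBall 0 r = f '' closedBall 0 (s * r) := by
  rw [← image_image f, image_smul, smul_closedBall' (Complex.ofReal_ne_zero.2 hs.ne'), smul_zero,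
    Complex.norm_of_nonneg hs.le]

section NormedSpace

variable {E : Type*} [NormedAddCommGroup E] [NormedSpace ℂ E] {f g : E → E} {r s t ε ρ : ℝ} {y : E}

namespace IsExpandingEmbedding

theorem exists_expandsOn (hf : IsExpandingEmbedding f r) :
    ∃ c > 0, DifferentiableOn ℂ f (ball 0 r) ∧ ExpandsOn c f (ball 0 r) := by
  obtain ⟨t, ht, c, hc, hd, hexp⟩ := hf
  have hsub : ball (0 : E) r ⊆ ball 0 t := ball_subset_ball ht.le
  exact ⟨c, hc, hd.mono hsub, hexp.mono hsub⟩

theorem differentiableOn (hf : IsExpandingEmbedding f r) :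
    DifferentiableOn ℂ f (closedBall 0 r) := by
  obtain ⟨t, ht, -, -, hd, -⟩ := hf
  exact hd.mono (closedBall_subset_ball ht)

theorem isCompact_image [FiniteDimensional ℂ E] (hf : IsExpandingEmbedding f r) :
    IsCompact (f '' closedBall 0 r) := by
  have : ProperSpace E := FiniteDimensional.proper ℂ E
  exact (isCompact_closedBall _ _).image_of_continuousOn hf.differentiableOn.continuousOn

theorem comp_smul (hs : 0 < s) (hf : IsExpandingEmbedding f (s * r)) :
    IsExpandingEmbedding (fun z => f ((s : ℂ) • z)) r := by
  obtain ⟨t, ht, c, hc, hd, hexp⟩ := hf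
  have hmaps : MapsTo (fun z : E => (s : ℂ) • z) (ball 0 (t / s)) (ball 0 t) := fun z hz => by
    rw [mem_ball_zero_iff, lt_div_iff₀ hs] at hz
    rw [mem_ball_zero_iff, norm_smul, Complex.norm_of_nonneg hs.le]
    linarith
  refine ⟨t / s, (lt_div_iff₀ hs).2 (by linarith), c * s, by positivity,
    hd.comp (differentiableOn_id.const_smul _) hmaps, fun z hz w hw => ?_⟩
  have h := hexp (hmaps hz) (hmaps hw)
  rwa [← smul_sub, norm_smul, Complex.norm_of_nonneg hs.le, ← mul_assoc] at h

theorem exists_larger_radius [FiniteDimensional ℂ E] (ht : 0 ≤ t) (hf : IsExpandingEmbedding f t)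
    {O : Set E} (hO : IsOpen O) (hfO : f '' closedBall 0 t ⊆ O) :
    ∃ t₀ > t, ∀ r < t₀, IsExpandingEmbedding f r ∧ f '' closedBall 0 r ⊆ O := by
  have : ProperSpace E := FiniteDimensional.proper ℂ E
  obtain ⟨t₁, ht₁, c, hc, hd, hexp⟩ := hf
  have hopen : IsOpen (ball 0 t₁ ∩ f ⁻¹' O) := hd.continuousOn.isOpen_inter_preimage isOpen_ball hO
  obtain ⟨δ, hδ, hsub⟩ := (isCompact_closedBall (0 : E) t).exists_thickening_subset_open hopen
    fun z hz => ⟨closedBall_subset_ball ht₁ hz, hfO (mem_image_of_mem f hz)⟩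
  rw [thickening_closedBall hδ ht] at hsub
  refine ⟨min t₁ (δ + t), lt_min ht₁ (by linarith), fun r hr =>
    ⟨⟨t₁, hr.trans_le (min_le_left _ _), c, hc, hd, hexp⟩, image_subset_iff.2 fun z hz => ?_⟩⟩
  exact (hsub (closedBall_subset_ball (hr.trans_le (min_le_right _ _)) hz)).2

end IsExpandingEmbedding

/-- The map `g` extends the image of `closedBall 0 r` under `f` towards `y`, up to an error `ε`:
away from the boundary it is close to `f`, and its image stays near the old image and
`closedBall y ρ` and fills a definite proportion of `ball y ρ`. -/
structure IsExtensionToward (f : E → E) (y : E) (ρ r ε : ℝ) (g : E → E) : Prop where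
  isExpandingEmbedding : IsExpandingEmbedding g r
  norm_sub_le : ∀ z ∈ closedBall (0 : E) (r * (1 - ε)), ‖g z - f z‖ ≤ ε
  image_subset : g '' closedBall 0 r ⊆ thickening ε (f '' closedBall 0 r ∪ closedBall y ρ)
  exists_closedBall_subset : ∃ q, closedBall q (ρ / 120) ⊆ ball y ρ ∩ g '' closedBall 0 r

theorem IsExtensionToward.comp_smul (hs : 0 < s)
    (hg : IsExtensionToward (fun z => f ((s : ℂ) • z)) y ρ 1 ε g) :
    IsExtensionToward f y ρ s ε fun z => g (((s⁻¹ : ℝ) : ℂ) • z) := by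
  have hs' : 0 < s⁻¹ := inv_pos.2 hs
  have hf := image_comp_smul_closedBall f hs 1
  have hgs := image_comp_smul_closedBall g hs' s
  have hmul : s⁻¹ * s = 1 := inv_mul_cancel₀ hs.ne'
  rw [mul_one] at hf
  rw [hmul] at hgs
  refine ⟨.comp_smul hs' (hmul.symm ▸ hg.isExpandingEmbedding), fun z hz => ?_, ?_, ?_⟩
  · have h := hg.norm_sub_le (((s⁻¹ : ℝ) : ℂ) • z) (by
      rw [mem_closedBall_zero_iff] at hz ⊢
      rwa [norm_smul, Complex.norm_of_nonneg hs'.le, inv_mul_le_iff₀ hs, one_mul])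
    rwa [smul_smul, ← Complex.ofReal_mul, mul_inv_cancel₀ hs.ne', Complex.ofReal_one,
      one_smul] at h
  · rw [hgs, ← hf]
    exact hg.image_subset
  · rw [hgs]
    exact hg.exists_closedBall_subset

end NormedSpace

variable {E : Type*} [NormedAddCommGroup E] [InnerProductSpace ℂ E] [FiniteDimensional ℂ E]
  {f : E → E} {r t ε ρ : ℝ} {y : E}

theorem IsExpandingEmbedding.exists_isExtensionToward_of_unit_ball (hf : IsExpandingEmbedding f 1)
    (hρ : infDist y (f '' closedBall 0 1) = ρ) (hρ0 : 0 < ρ) (hε : 0 < ε) :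
    ∃ g, IsExtensionToward f y ρ 1 ε g := by
  obtain ⟨r, hr, c, hc, hd, hexp⟩ := hf
  obtain ⟨M, x, a, c', hM, hy⟩ := exists_isAdapted_at_nearest_point hr hc hd hexp (hρ.symm ▸ hρ0)
  rw [hρ] at hy
  have hx := hM.norm_eq_one
  have hfx : ContinuousAt f x := (hd.differentiableAt (isOpen_ball.mem_nhds
    (mem_ball_zero_iff.2 (hx.trans_lt hr)))).continuousAt
  have hfar : ∀ z ∈ closedBall (0 : E) 1, ρ ≤ ‖f z - f x - (ρ : ℂ) • M x‖ := fun z hz => by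
    rw [sub_sub, ← hy, ← dist_eq_norm, dist_comm, ← hρ]
    exact infDist_le_dist_of_mem (mem_image_of_mem f hz)
  obtain ⟨η, hemb, hclose, himage, hfill⟩ :=
    ((hM.eventually_isExpandingEmbedding_addSpike hr hc hd hexp hρ0 hfar).and
      ((eventually_norm_addSpike_sub_le hx hρ0 hε).and
        ((eventually_exists_norm_addSpike_sub_le hx hρ0 hfx (half_pos hε)).and
          (eventually_closedBall_subset_image_addSpike (hd.mono (ball_subset_ball hr.le))
            hfx hx hρ0)))).exists
  refine ⟨addSpike f M x ρ η, hemb, fun z hz => hclose z ?_, ?_, _, subset_inter ?_ hfill⟩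
  · rwa [mem_closedBall_zero_iff, one_mul] at hz
  · rintro _ ⟨z, hz, rfl⟩
    obtain ⟨q, hq, hzq⟩ := himage z hz
    refine mem_thickening_iff.2 ⟨q, hy ▸ hq, ?_⟩
    rw [dist_eq_norm]
    linarith
  · refine closedBall_subset_ball' ?_
    rw [hy, dist_add_left, dist_eq_norm, ← sub_smul, ← Complex.ofReal_sub, norm_smul,
      M.norm_map, hx, Complex.norm_real, Real.norm_of_nonpos (by linarith)]
    linarith

theorem IsExpandingEmbedding.exists_isExtensionToward (hr : 0 < r) (hf : IsExpandingEmbedding f r)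
    (hρ : infDist y (f '' closedBall 0 r) = ρ) (hρ0 : 0 < ρ) (hε : 0 < ε) :
    ∃ g, IsExtensionToward f y ρ r ε g := by
  rw [← mul_one r] at hf hρ
  rw [← image_comp_smul_closedBall f hr] at hρ
  obtain ⟨g, hg⟩ := (hf.comp_smul hr).exists_isExtensionToward_of_unit_ball hρ hρ0 hε
  exact ⟨_, hg.comp_smul hr⟩

theorem IsExpandingEmbedding.exists_forall_isExtensionToward_image_subset (htr : t < r)
    (hr1 : r ≤ 1) (hf : IsExpandingEmbedding f r) :
    ∃ e > 0, ∀ g y ρ ε, 0 < ε → ε ≤ e → IsExtensionToward f y ρ r ε g →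
      (∀ z ∈ ball (0 : E) t, ‖g z - f z‖ ≤ ε) ∧ f '' closedBall 0 t ⊆ g '' closedBall 0 r := by
  obtain ⟨c, hc, hd, hexp⟩ := hf.exists_expandsOn
  obtain ⟨m, htm, hmr⟩ := exists_between htr
  have hsub : ball (0 : E) m ⊆ ball 0 r := ball_subset_ball hmr.le
  obtain ⟨e, he, hstab⟩ := exists_stableOn htm hc (hd.mono hsub) (hexp.mono hsub) isOpen_univ
    (subset_univ _)
  refine ⟨min e (r - m), lt_min he (sub_pos.2 hmr), fun g y ρ ε hε hεe hg => ?_⟩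
  have hεm : ε ≤ r - m := hεe.trans (min_le_right _ _)
  have hclose : ∀ z ∈ ball (0 : E) m, ‖g z - f z‖ ≤ ε := fun z hz =>
    hg.norm_sub_le z (ball_subset_closedBall (ball_subset_ball (by nlinarith) hz))
  have hball : ball (0 : E) m ⊆ closedBall 0 r := hsub.trans ball_subset_closedBall
  refine ⟨fun z hz => hclose z (ball_subset_ball htm.le hz), ?_⟩
  exact (hstab g (hg.isExpandingEmbedding.differentiableOn.mono hball) fun z hz =>
    (hclose z hz).trans (hεe.trans (min_le_left _ _))).2.2.trans (image_mono hball)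

/-- The set `T'` enlarges `T` within a neighbourhood of `T ∪ closedBall y ρ`, gaining at least a
ball with centre `q` and radius proportional to `ρ`. -/
structure IsGrowth {X : Type*} [PseudoMetricSpace X] (T T' : Set X) (ε ρ : ℝ) (y q : X) :
    Prop where
  subset : T ⊆ T'
  subset_thickening : T' ⊆ thickening ε (T ∪ closedBall y ρ)
  closedBall_subset : closedBall q (ρ / 240) ⊆ T'
  disjoint : Disjoint (closedBall q (ρ / 240)) T

-- Enlarging the radius from `t` to `r` first makes room for `g` to cover the old image: the
-- perturbation is controlled only away from the boundary.
theorem IsExpandingEmbedding.exists_isGrowth (ht : 0 < t) (ht1 : t < 1)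
    (hf : IsExpandingEmbedding f t) (hρ : infDist y (f '' closedBall 0 t) = ρ) (hρ0 : 0 < ρ)
    (hε : 0 < ε) :
    ∃ r g q, t < r ∧ r < 1 ∧ IsExpandingEmbedding g r ∧ (∀ z ∈ ball (0 : E) t, ‖g z - f z‖ ≤ ε) ∧
      IsGrowth (f '' closedBall 0 t) (g '' closedBall 0 r) ε ρ y q := by
  have hne : (f '' closedBall 0 t).Nonempty := (nonempty_closedBall.2 ht.le).image f
  obtain ⟨δ, hδ, hδε, hδρ⟩ : ∃ δ > 0, δ ≤ ε / 2 ∧ δ ≤ ρ / 2 :=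
    ⟨min (ε / 2) (ρ / 2), by positivity, min_le_left _ _, min_le_right _ _⟩
  obtain ⟨t₀, ht₀, hrad⟩ := hf.exists_larger_radius ht.le (isOpen_thickening (δ := δ))
    (self_subset_thickening hδ _)
  obtain ⟨r, htr, hr⟩ := exists_between (lt_min ht₀ ht1)
  have hr1 : r < 1 := hr.trans_le (min_le_right _ _)
  obtain ⟨hfr, hthick⟩ := hrad r (hr.trans_le (min_le_left _ _))
  have hsub : f '' closedBall 0 t ⊆ f '' closedBall 0 r :=
    image_mono (closedBall_subset_closedBall htr.le)
  obtain ⟨ρ', hρ'⟩ : ∃ ρ', infDist y (f '' closedBall 0 r) = ρ' := ⟨_, rfl⟩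
  have hρ'_le : ρ' ≤ ρ := hρ' ▸ hρ ▸ infDist_le_infDist_of_subset hsub hne
  have hρ'_ge : ρ ≤ ρ' + δ :=
    hρ' ▸ hρ ▸ infDist_le_infDist_add_of_subset_thickening (hne.mono hsub) hthick y
  obtain ⟨e, he, hcover⟩ := hfr.exists_forall_isExtensionToward_image_subset htr hr1.le
  have hmin : 0 < min (ε / 2) e := by positivity
  obtain ⟨g, hg⟩ := hfr.exists_isExtensionToward (ht.trans htr) hρ' (by linarith) hmin
  obtain ⟨hclose, hfg⟩ := hcover g y ρ' _ hmin (min_le_right _ _) hg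
  have hmin_le : min (ε / 2) e ≤ ε / 2 := min_le_left _ _
  obtain ⟨q, hq⟩ := hg.exists_closedBall_subset
  have hqsub : closedBall q (ρ / 240) ⊆ closedBall q (ρ' / 120) :=
    closedBall_subset_closedBall (by linarith)
  refine ⟨r, g, q, htr, hr1, hg.isExpandingEmbedding, fun z hz => (hclose z hz).trans (by linarith),
    hfg, hg.image_subset.trans ?_, hqsub.trans (hq.trans inter_subset_right),
    disjoint_ball_infDist.mono_left (hqsub.trans ((hq.trans inter_subset_left).trans
      (ball_subset_ball (hρ'_le.trans_eq hρ.symm))))⟩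
  exact (thickening_mono hmin_le _).trans (thickening_union_subset_thickening (half_pos hε)
    (hthick.trans (thickening_mono hδε _)) (closedBall_subset_closedBall hρ'_le) (add_halves ε).le)

end Extension

/-! ### Exhaustion up to a null set -/

section Exhaustion

variable {E : Type*} [NormedAddCommGroup E] [MeasurableSpace E]

/-- The sets `T k` grow inside `U`, each time by a definite proportion of a ball touching `T k`,
whose radius `ρ k` is almost the largest one for balls in `U` touching `T k`. The errors `e k` are
small in comparison with the shape of `T k`. -/
structure IsExhaustion (μ : Measure E) (U : Set E) (T : ℕ → Set E) (e ρ : ℕ → ℝ) (y q : ℕ → E) :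
    Prop where
  nonempty : ∀ k, (T k).Nonempty
  subset : ∀ k, T k ⊆ U
  error_succ_le : ∀ k, e (k + 1) ≤ e k / 2
  measure_shell_le : ∀ k, μ (thickening (3 * e k) (T k) \ T k) ≤ 2⁻¹ ^ k
  infDist_le : ∀ k x, closedBall x (infDist x (T k)) ⊆ U → infDist x (T k) ≤ 2 * ρ k
  isGrowth : ∀ k, IsGrowth (T k) (T (k + 1)) (min (e k) (ρ k)) (ρ k) (y k) (q k)

namespace IsExhaustion

variable {μ : Measure E} {U : Set E} {T : ℕ → Set E} {e ρ : ℕ → ℝ} {y q : ℕ → E} {x : E}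

theorem monotone (h : IsExhaustion μ U T e ρ y q) : Monotone T :=
  monotone_nat_of_le_succ fun k => (h.isGrowth k).subset

theorem error_pos (h : IsExhaustion μ U T e ρ y q) (k : ℕ) : 0 < e k := by
  obtain ⟨p, hp⟩ := h.nonempty (k + 1)
  obtain ⟨p', -, hpp'⟩ := mem_thickening_iff.1 ((h.isGrowth k).subset_thickening hp)
  exact dist_nonneg.trans_lt (hpp'.trans_le (min_le_left _ _))

theorem infDist_sub_error_le (h : IsExhaustion μ U T e ρ y q) {k : ℕ}
    (hxU : closedBall x (infDist x (T k)) ⊆ U) (hx : x ∉ closedBall (y k) (4 * ρ k)) :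
    infDist x (T k) - e k ≤ infDist x (T (k + 1)) := by
  have hfar : 4 * ρ k < dist x (y k) := not_le.1 hx
  have hnear := h.infDist_le k x hxU
  refine (le_infDist (h.nonempty _)).2 fun p hp => ?_
  obtain ⟨p', hp', hpp'⟩ := mem_thickening_iff.1 ((h.isGrowth k).subset_thickening hp)
  obtain ⟨hpe, hpρ⟩ := lt_min_iff.1 hpp'
  have htri := dist_triangle x p p'
  rcases hp' with hp' | hp'
  · linarith [infDist_le_dist_of_mem (x := x) hp']
  · linarith [mem_closedBall.1 hp', dist_triangle x p' (y k), h.error_pos k]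

theorem tsum_measure_closedBall_ne_top [OpensMeasurableSpace E] (h : IsExhaustion μ U T e ρ y q)
    (hU : μ U ≠ ∞) : ∑' k, μ (closedBall (q k) (ρ k / 240)) ≠ ∞ := by
  have hdisj : Pairwise (Function.onFun Disjoint fun k => closedBall (q k) (ρ k / 240)) :=
    (pairwise_disjoint_on _).2 fun i j hij => ((h.isGrowth j).disjoint.mono_right
      ((h.isGrowth i).closedBall_subset.trans (h.monotone hij))).symm
  rw [← measure_iUnion hdisj fun k => measurableSet_closedBall]
  exact measure_ne_top_of_subset
    (iUnion_subset fun k => (h.isGrowth k).closedBall_subset.trans (h.subset _)) hU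

variable [BorelSpace E] [μ.IsAddHaarMeasure]

theorem tsum_measure_closedBall_four_mul_ne_top [NormedSpace ℝ E] [FiniteDimensional ℝ E]
    (h : IsExhaustion μ U T e ρ y q) (hU : μ U ≠ ∞) :
    ∑' k, μ (closedBall (y k) (4 * ρ k)) ≠ ∞ := by
  have hscale : ∀ k, μ (closedBall (y k) (4 * ρ k)) =
      ENNReal.ofReal (960 ^ Module.finrank ℝ E) * μ (closedBall (q k) (ρ k / 240)) := fun k => by
    rw [show 4 * ρ k = 960 * (ρ k / 240) by ring,
      Measure.addHaar_closedBall_mul_of_pos μ _ (by norm_num),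
      Measure.addHaar_closedBall_center μ (q k)]
  simp_rw [hscale]
  rw [ENNReal.tsum_mul_left]
  exact ENNReal.mul_ne_top ENNReal.ofReal_ne_top (h.tsum_measure_closedBall_ne_top hU)

theorem eventually_radius_lt (h : IsExhaustion μ U T e ρ y q) (hU : μ U ≠ ∞) {δ : ℝ}
    (hδ : 0 < δ) : ∀ᶠ k in atTop, ρ k < δ := by
  have hpos : 0 < μ (closedBall (0 : E) (δ / 240)) := measure_closedBall_pos μ _ (by positivity)
  filter_upwards [(ENNReal.tendsto_atTop_zero_of_tsum_ne_top
    (h.tsum_measure_closedBall_ne_top hU)).eventually_lt_const hpos] with k hk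
  by_contra! hδk
  refine hk.not_ge ?_
  rw [Measure.addHaar_closedBall_center μ (q k)]
  exact measure_mono (closedBall_subset_closedBall (by linarith))

theorem mem_closure_of_forall_closedBall_subset (h : IsExhaustion μ U T e ρ y q) (hU : μ U ≠ ∞)
    {n : ℕ} (hx : ∀ k ≥ n, closedBall x (infDist x (T k)) ⊆ U) : x ∈ closure (⋃ k, T k) := by
  refine Metric.mem_closure_iff.2 fun δ hδ => ?_
  obtain ⟨k, hk, hkn⟩ :=
    ((h.eventually_radius_lt hU (half_pos hδ)).and (eventually_ge_atTop n)).exists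
  obtain ⟨p, hp, hxp⟩ := (infDist_lt_iff (h.nonempty k)).1
    (show infDist x (T k) < δ by linarith [h.infDist_le k x (hx k hkn)])
  exact ⟨p, mem_iUnion.2 ⟨k, hp⟩, hxp⟩

theorem mem_interior_closure (h : IsExhaustion μ U T e ρ y q) (hUo : IsOpen U) (hU : μ U ≠ ∞)
    (hxU : x ∈ U) (hx : x ∈ closure (⋃ k, T k)) : x ∈ interior (closure (⋃ k, T k)) := by
  obtain ⟨b, hb, hbU⟩ := Metric.isOpen_iff.1 hUo x hxU
  obtain ⟨p, hp, hxp⟩ := Metric.mem_closure_iff.1 hx (b / 4) (by positivity)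
  obtain ⟨n, hn⟩ := mem_iUnion.1 hp
  refine mem_interior.2 ⟨ball x (b / 4), fun z hz => ?_, isOpen_ball, mem_ball_self (by positivity)⟩
  refine h.mem_closure_of_forall_closedBall_subset hU (n := n) fun k hk w hw => hbU ?_
  rw [mem_ball] at hz ⊢
  rw [mem_closedBall] at hw
  linarith [infDist_le_dist_of_mem (x := z) (h.monotone hk hn), dist_triangle z x p,
    dist_triangle w z x]

theorem subset_closure_iUnion (h : IsExhaustion μ U T e ρ y q) (hUo : IsOpen U)
    (hUc : IsPreconnected U) (hU : μ U ≠ ∞) : U ⊆ closure (⋃ k, T k) := by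
  have hsub : U ⊆ interior (closure (⋃ k, T k)) := by
    refine hUc.subset_of_closure_inter_subset isOpen_interior ?_ fun x ⟨hx, hxU⟩ =>
      h.mem_interior_closure hUo hU hxU
        (closure_minimal interior_subset isClosed_closure hx)
    obtain ⟨x, hx⟩ := h.nonempty 0
    exact ⟨x, h.subset 0 hx, h.mem_interior_closure hUo hU (h.subset 0 hx)
      (subset_closure (mem_iUnion.2 ⟨0, hx⟩))⟩
  exact hsub.trans interior_subset

theorem eventually_infDist_lt (h : IsExhaustion μ U T e ρ y q) (hUo : IsOpen U)
    (hUc : IsPreconnected U) (hU : μ U ≠ ∞) (hx : x ∈ U) {δ : ℝ} (hδ : 0 < δ) :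
    ∀ᶠ k in atTop, infDist x (T k) < δ := by
  obtain ⟨p, hp, hxp⟩ := Metric.mem_closure_iff.1 (h.subset_closure_iUnion hUo hUc hU hx) δ hδ
  obtain ⟨n, hn⟩ := mem_iUnion.1 hp
  filter_upwards [eventually_ge_atTop n] with k hk
  exact (infDist_le_dist_of_mem (h.monotone hk hn)).trans_lt hxp

-- Otherwise `infDist x (T k) - 2 * e k` would eventually be positive and nondecreasing.
theorem frequently_mem (h : IsExhaustion μ U T e ρ y q) (hUo : IsOpen U)
    (hUc : IsPreconnected U) (hU : μ U ≠ ∞) (hxU : x ∈ U) (hxT : ∀ k, x ∉ T k) :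
    ∃ᶠ k in atTop,
      x ∈ thickening (3 * e k) (T k) \ T k ∪ closedBall (y k) (4 * ρ k) := by
  by_contra hcon
  obtain ⟨n₀, hn₀⟩ := eventually_atTop.1 (not_frequently.1 hcon)
  obtain ⟨b, hb, hbU⟩ := Metric.isOpen_iff.1 hUo x hxU
  have hsmall := fun δ hδ => h.eventually_infDist_lt (δ := δ) hUo hUc hU hxU hδ
  obtain ⟨n, hnb, hn⟩ := ((hsmall b hb).and (eventually_ge_atTop n₀)).exists
  have hstep : ∀ k ≥ n, infDist x (T k) - e k ≤ infDist x (T (k + 1)) := fun k hk => by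
    have hle : infDist x (T k) ≤ infDist x (T n) :=
      infDist_le_infDist_of_subset (h.monotone hk) (h.nonempty n)
    exact h.infDist_sub_error_le ((closedBall_subset_ball (hle.trans_lt hnb)).trans hbU)
      fun hx => hn₀ k (hn.trans hk) (Or.inr hx)
  have hincr : ∀ k ≥ n, infDist x (T n) - 2 * e n ≤ infDist x (T k) - 2 * e k := fun k hk => by
    induction k, hk using Nat.le_induction with
    | base => rfl
    | succ k hk ih => linarith [hstep k hk, h.error_succ_le k]
  have hpos : 3 * e n ≤ infDist x (T n) := by
    by_contra! hlt
    exact hn₀ n hn (Or.inl ⟨(mem_thickening_iff_infDist_lt (h.nonempty n)).2 hlt, hxT n⟩)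
  obtain ⟨k, hk, hkn⟩ := ((hsmall (e n) (h.error_pos n)).and (eventually_ge_atTop n)).exists
  linarith [hincr k hkn, h.error_pos k]

theorem measure_diff_iUnion_eq_zero [NormedSpace ℝ E] [FiniteDimensional ℝ E]
    (h : IsExhaustion μ U T e ρ y q) (hUo : IsOpen U) (hUc : IsPreconnected U) (hU : μ U ≠ ∞) :
    μ (U \ ⋃ k, T k) = 0 := by
  have hsub : U \ ⋃ k, T k ⊆ {x | ∃ᶠ k in atTop,
      x ∈ thickening (3 * e k) (T k) \ T k ∪ closedBall (y k) (4 * ρ k)} := fun x hx =>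
    h.frequently_mem hUo hUc hU hx.1 fun k hk => hx.2 (mem_iUnion.2 ⟨k, hk⟩)
  refine measure_mono_null hsub (measure_setOfPred_frequently_eq_zero ?_)
  have hsum : ∑' k, (2⁻¹ ^ k + μ (closedBall (y k) (4 * ρ k))) ≠ ∞ := by
    rw [ENNReal.tsum_add, ENNReal.tsum_geometric, ENNReal.one_sub_inv_two, inv_inv]
    exact ENNReal.add_ne_top.2
      ⟨ENNReal.ofNat_ne_top, h.tsum_measure_closedBall_four_mul_ne_top hU⟩
  exact ne_top_of_le_ne_top hsum (ENNReal.tsum_le_tsum fun k =>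
    (measure_union_le _ _).trans (by gcongr; exact h.measure_shell_le k))

end IsExhaustion

end Exhaustion

/-! ### Iteration and passage to the limit -/

section Limit

/-- Holomorphic maps on growing balls, each so close to its predecessor that it, all later maps and
their limit share the injectivity, the target `U` and the covered image of the predecessor. -/
structure IsStableSequence {E : Type*} [NormedAddCommGroup E] [NormedSpace ℂ E] (U : Set E)
    (f : ℕ → E → E) (r t e : ℕ → ℝ) : Prop where
  radius_pos : ∀ k, 0 < r k
  radius_lt : ∀ k, r k < t k
  lt_radius_succ : ∀ k, t k < r (k + 1)
  bddAbove : BddAbove (range r)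
  error_succ_le : ∀ k, e (k + 1) ≤ e k / 2
  differentiableOn : ∀ k, DifferentiableOn ℂ (f k) (ball 0 (t k))
  norm_sub_le : ∀ k, ∀ z ∈ ball (0 : E) (t k), ‖f (k + 1) z - f k z‖ ≤ e k / 2
  stableOn : ∀ k, StableOn (f k) (r k) (t k) (e k) U

namespace IsStableSequence

variable {E : Type*} [NormedAddCommGroup E] [NormedSpace ℂ E] {U : Set E} {f : ℕ → E → E}
  {r t e : ℕ → ℝ} {F : E → E} {z : E} {k : ℕ}

theorem monotone_radius (h : IsStableSequence U f r t e) : Monotone r :=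
  monotone_nat_of_le_succ fun k => ((h.radius_lt k).trans (h.lt_radius_succ k)).le

theorem ball_subset_ball_add (h : IsStableSequence U f r t e) (k n : ℕ) :
    ball (0 : E) (t k) ⊆ ball 0 (t (n + k)) :=
  ball_subset_ball (monotone_nat_of_le_succ (f := t)
    (fun k => ((h.lt_radius_succ k).trans (h.radius_lt _)).le) (Nat.le_add_left k n))

theorem error_add_le (h : IsStableSequence U f r t e) (k n : ℕ) : e (n + k) ≤ e k / 2 ^ n := by
  induction n with
  | zero => simp
  | succ n ih =>
    rw [add_right_comm, pow_succ, ← div_div]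
    exact (h.error_succ_le _).trans (by linarith)

theorem error_nonneg (h : IsStableSequence U f r t e) (k : ℕ) : 0 ≤ e k := by
  have h0 : (0 : E) ∈ ball 0 (t k) := mem_ball_self ((h.radius_pos k).trans (h.radius_lt k))
  linarith [norm_nonneg (f (k + 1) 0 - f k 0), h.norm_sub_le k 0 h0]

theorem tendsto_error (h : IsStableSequence U f r t e) : Tendsto e atTop (𝓝 0) := by
  refine squeeze_zero h.error_nonneg (h.error_add_le 0) ?_
  simpa [div_eq_mul_inv] using (tendsto_pow_atTop_nhds_zero_of_lt_one (r := (2⁻¹ : ℝ))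
    (by norm_num) (by norm_num)).const_mul (e 0)

theorem dist_le (h : IsStableSequence U f r t e) (hz : z ∈ ball 0 (t k)) (n : ℕ) :
    dist (f (n + k) z) (f (n + 1 + k) z) ≤ e k / 2 / 2 ^ n := by
  rw [dist_comm, dist_eq_norm, add_right_comm, div_right_comm]
  linarith [h.norm_sub_le (n + k) z (h.ball_subset_ball_add k n hz), h.error_add_le k n]

theorem exists_norm_sub_le [CompleteSpace E] (h : IsStableSequence U f r t e) :
    ∃ F : E → E, ∀ k, ∀ z ∈ ball (0 : E) (t k), ‖F z - f k z‖ ≤ e k := by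
  suffices ∀ z, ∃ a, ∀ k, z ∈ ball (0 : E) (t k) → ‖a - f k z‖ ≤ e k by
    choose F hF using this
    exact ⟨F, fun k z => hF z k⟩
  intro z
  by_cases hz : ∃ k, z ∈ ball (0 : E) (t k)
  · obtain ⟨k₀, hk₀⟩ := hz
    obtain ⟨a, ha⟩ := cauchySeq_tendsto_of_complete
      (cauchySeq_of_le_geometric_two (f := fun n => f (n + k₀) z) (h.dist_le hk₀))
    refine ⟨a, fun k hk => ?_⟩
    rw [tendsto_add_atTop_iff_nat (f := fun n => f n z), ← tendsto_add_atTop_iff_nat k] at ha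
    simpa [dist_eq_norm'] using dist_le_of_le_geometric_two_of_tendsto₀ (h.dist_le hk) ha
  · exact ⟨0, fun k hk => absurd ⟨k, hk⟩ hz⟩

theorem differentiableOn_of_norm_sub_le [CompleteSpace E] (h : IsStableSequence U f r t e)
    (hF : ∀ k, ∀ z ∈ ball (0 : E) (t k), ‖F z - f k z‖ ≤ e k) (k : ℕ) :
    DifferentiableOn ℂ F (ball 0 (t k)) := by
  refine differentiableOn_of_tendstoUniformlyOn (l := atTop) (f := fun n => f (n + k)) isOpen_ball
    (fun n => (h.differentiableOn _).mono (h.ball_subset_ball_add k n))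
    (Metric.tendstoUniformlyOn_iff.2 fun δ hδ => ?_)
  filter_upwards [((tendsto_add_atTop_iff_nat k).2 h.tendsto_error).eventually_lt_const hδ]
    with n hn z hz
  rw [dist_eq_norm]
  exact (hF _ z (h.ball_subset_ball_add k n hz)).trans_lt hn

theorem exists_ball [CompleteSpace E] (h : IsStableSequence U f r t e) :
    ∃ (F : E → E) (R : ℝ), 0 < R ∧ DifferentiableOn ℂ F (ball 0 R) ∧ InjOn F (ball 0 R) ∧
      F '' ball 0 R ⊆ U ∧ ∀ k, f k '' closedBall 0 (r k) ⊆ F '' ball 0 R := by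
  obtain ⟨F, hF⟩ := h.exists_norm_sub_le
  have hd := h.differentiableOn_of_norm_sub_le hF
  have hle : ∀ k, r k ≤ ⨆ k, r k := le_ciSup h.bddAbove
  have hex : ∀ z ∈ ball (0 : E) (⨆ k, r k), ∃ k, z ∈ ball 0 (r k) := fun z hz => by
    obtain ⟨k, hk⟩ := exists_lt_of_lt_ciSup (mem_ball.1 hz)
    exact ⟨k, hk⟩
  refine ⟨F, ⨆ k, r k, (h.radius_pos 0).trans_le (hle 0), fun z hz => ?_, fun z hz w hw hzw => ?_,
    ?_, fun k => ?_⟩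
  · obtain ⟨k, hk⟩ := hex z hz
    exact ((hd k).differentiableAt (isOpen_ball.mem_nhds
      (ball_subset_ball (h.radius_lt k).le hk))).differentiableWithinAt
  · obtain ⟨k, hk⟩ := hex z hz
    obtain ⟨l, hl⟩ := hex w hw
    have hmono := fun {i j} (hij : i ≤ j) =>
      ball_subset_closedBall.trans (closedBall_subset_closedBall (x := (0 : E))
        (h.monotone_radius hij))
    exact (h.stableOn _ F (hd _) (hF _)).1 (hmono (le_max_left k l) hk)
      (hmono (le_max_right k l) hl) hzw
  · rintro _ ⟨z, hz, rfl⟩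
    obtain ⟨k, hk⟩ := hex z hz
    exact (h.stableOn k F (hd k) (hF k)).2.1 (mem_image_of_mem F (ball_subset_closedBall hk))
  · exact (h.stableOn k F (hd k) (hF k)).2.2.trans
      (image_mono (ball_subset_ball ((h.lt_radius_succ k).le.trans (hle (k + 1)))))

theorem exists_unit_ball [CompleteSpace E] (h : IsStableSequence U f r t e) :
    ∃ F : E → E, DifferentiableOn ℂ F (ball 0 1) ∧ InjOn F (ball 0 1) ∧
      F '' ball 0 1 ⊆ U ∧ ∀ k, f k '' closedBall 0 (r k) ⊆ F '' ball 0 1 := by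
  obtain ⟨F, R, hR, hd, hinj, hU, hcov⟩ := h.exists_ball
  have hR' : (R : ℂ) ≠ 0 := Complex.ofReal_ne_zero.2 hR.ne'
  have hball : (fun z : E => (R : ℂ) • z) '' ball 0 1 = ball 0 R := by
    rw [image_smul, _root_.smul_ball hR', smul_zero, mul_one, Complex.norm_of_nonneg hR.le]
  have hmaps : MapsTo (fun z : E => (R : ℂ) • z) (ball 0 1) (ball 0 R) :=
    mapsTo_iff_image_subset.2 hball.subset
  have himage : (fun z => F ((R : ℂ) • z)) '' ball 0 1 = F '' ball 0 R := by
    rw [← image_image F, hball]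
  exact ⟨fun z => F ((R : ℂ) • z), hd.comp (differentiableOn_id.const_smul _) hmaps,
    hinj.comp (smul_right_injective E hR').injOn hmaps, himage ▸ hU, himage ▸ hcov⟩

end IsStableSequence

end Limit

section Iteration

theorem exists_measure_thickening_diff_le {X : Type*} [MetricSpace X] [ProperSpace X]
    [MeasurableSpace X] [BorelSpace X] (μ : Measure X) [IsFiniteMeasureOnCompacts μ] {K : Set X}
    (hK : IsCompact K) {ε : ℝ≥0∞} (hε : ε ≠ 0) : ∃ δ > 0, μ (thickening δ K \ K) ≤ ε := by
  have hlt : ∀ᶠ δ in 𝓝[>] (0 : ℝ), μ (cthickening δ K) < μ K + ε :=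
    ((tendsto_measure_cthickening_of_isCompact hK).mono_left nhdsWithin_le_nhds).eventually_lt_const
      (ENNReal.lt_add_right hK.measure_lt_top.ne hε)
  obtain ⟨δ, hδ, hδ0⟩ := (hlt.and self_mem_nhdsWithin).exists
  refine ⟨δ, hδ0, ?_⟩
  rw [measure_sdiff (self_subset_thickening hδ0 K) hK.isClosed.nullMeasurableSet
    hK.measure_lt_top.ne]
  exact tsub_le_iff_left.2 ((measure_mono (thickening_subset_cthickening δ K)).trans hδ.le)

theorem exists_forall_radius_le_of_closedBall_subset {E : Type*} [NormedAddCommGroup E]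
    [ProperSpace E] [NoncompactSpace E] [MeasurableSpace E] [BorelSpace E] (μ : Measure E)
    [μ.IsAddHaarMeasure] {U : Set E} (hU : μ U ≠ ∞) :
    ∃ M, ∀ x r, closedBall x r ⊆ U → r ≤ M := by
  have htop : Tendsto (fun n : ℕ => μ (closedBall (0 : E) n)) atTop (𝓝 ∞) := by
    rw [← measure_univ_of_isAddLeftInvariant μ, ← iUnion_closedBall_nat (0 : E)]
    exact tendsto_measure_iUnion_atTop fun m n hmn => closedBall_subset_closedBall (by gcongr)
  obtain ⟨n, hn⟩ := (htop.eventually_const_lt hU.lt_top).exists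
  refine ⟨n, fun x r hr => ?_⟩
  by_contra! hlt
  refine hn.not_ge ?_
  rw [← Measure.addHaar_closedBall_center μ x]
  exact measure_mono ((closedBall_subset_closedBall hlt.le).trans hr)

theorem exists_infDist_pos_closedBall_subset {X : Type*} [MetricSpace X] [PreconnectedSpace X]
    [NoncompactSpace X] {K U : Set X} (hK : IsCompact K) (hne : K.Nonempty) (hU : IsOpen U)
    (hKU : K ⊆ U) : ∃ y, 0 < infDist y K ∧ closedBall y (infDist y K) ⊆ U := by
  obtain ⟨δ, hδ, hδU⟩ := hK.exists_thickening_subset_open hU hKU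
  have hnot : ¬ thickening (δ / 2) K ⊆ K := fun hsub => by
    have hopen : IsOpen K := by
      rw [← hsub.antisymm (self_subset_thickening (half_pos hδ) K)]
      exact isOpen_thickening
    exact noncompact_univ X (IsClopen.eq_univ ⟨hK.isClosed, hopen⟩ hne ▸ hK)
  obtain ⟨y, hy, hyK⟩ := not_subset.1 hnot
  obtain ⟨x, hx, hyx⟩ := mem_thickening_iff.1 hy
  refine ⟨y, (hK.isClosed.notMem_iff_infDist_pos hne).1 hyK, fun p hp => hδU ?_⟩
  rw [mem_closedBall] at hp
  exact mem_thickening_iff.2 ⟨x, hx, by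
    linarith [infDist_le_dist_of_mem (x := y) hx, dist_triangle p y x]⟩

theorem exists_almost_largest_infDist {X : Type*} [MetricSpace X] [PreconnectedSpace X]
    [NoncompactSpace X] {K U : Set X} (hK : IsCompact K) (hne : K.Nonempty) (hU : IsOpen U)
    (hKU : K ⊆ U) (hbdd : ∃ M, ∀ x r, closedBall x r ⊆ U → r ≤ M) :
    ∃ y, 0 < infDist y K ∧ closedBall y (infDist y K) ⊆ U ∧
      ∀ x, closedBall x (infDist x K) ⊆ U → infDist x K ≤ 2 * infDist y K := by
  obtain ⟨M, hM⟩ := hbdd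
  obtain ⟨A, hA⟩ : ∃ A, A = {x | closedBall x (infDist x K) ⊆ U} := ⟨_, rfl⟩
  have hbddA : BddAbove ((infDist · K) '' A) := by
    refine ⟨M, ?_⟩
    rintro _ ⟨x, hx, rfl⟩
    exact hM x _ (hA.subset hx)
  obtain ⟨x₀, hx₀, hx₀U⟩ := exists_infDist_pos_closedBall_subset hK hne hU hKU
  have hx₀A : infDist x₀ K ∈ (infDist · K) '' A := ⟨x₀, hA.superset hx₀U, rfl⟩
  have hsup : 0 < sSup ((infDist · K) '' A) := hx₀.trans_le (le_csSup hbddA hx₀A)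
  obtain ⟨_, ⟨y, hy, rfl⟩, hlt⟩ := exists_lt_of_lt_csSup ⟨_, hx₀A⟩ (half_lt_self hsup)
  dsimp only at hlt
  refine ⟨y, by linarith, hA.subset hy, fun x hx => ?_⟩
  have hle : infDist x K ≤ sSup ((infDist · K) '' A) :=
    le_csSup hbddA ⟨x, hA.superset hx, rfl⟩
  linarith

variable {E : Type*} [NormedAddCommGroup E] [InnerProductSpace ℂ E] [MeasurableSpace E]
  {U : Set E} {μ : Measure E}

/-- The `k`-th step of the construction: an embedding of `closedBall 0 radius` in `U`. Embeddings
`error`-close to it remain injective on `closedBall 0 innerRadius`. -/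
structure Stage (U : Set E) (μ : Measure E) (k : ℕ) where
  map : E → E
  innerRadius : ℝ
  radius : ℝ
  error : ℝ
  innerRadius_pos : 0 < innerRadius
  innerRadius_lt : innerRadius < radius
  radius_lt_one : radius < 1
  error_pos : 0 < error
  isExpandingEmbedding : IsExpandingEmbedding map radius
  image_subset : map '' closedBall 0 radius ⊆ U
  stableOn : StableOn map innerRadius radius error U
  measure_shell_le : μ (thickening (3 * error) (map '' closedBall 0 radius) \
    map '' closedBall 0 radius) ≤ 2⁻¹ ^ k

namespace Stage

variable {k : ℕ}

/-- The part of `U` filled so far. -/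
def image (S : Stage U μ k) : Set E :=
  S.map '' closedBall 0 S.radius

theorem radius_pos (S : Stage U μ k) : 0 < S.radius :=
  S.innerRadius_pos.trans S.innerRadius_lt

theorem image_nonempty (S : Stage U μ k) : S.image.Nonempty :=
  (nonempty_closedBall.2 S.radius_pos.le).image S.map

/-- The stage `S'` arises from `S` by a small perturbation and fills a ball of radius proportional
to `ρ`, almost the largest radius of a closed ball in `U` touching the image of `S`. -/
structure IsSucc (S : Stage U μ k) (S' : Stage U μ (k + 1)) : Prop where
  radius_lt : S.radius < S'.innerRadius
  error_le : S'.error ≤ S.error / 2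
  norm_sub_le : ∀ z ∈ ball (0 : E) S.radius, ‖S'.map z - S.map z‖ ≤ S.error / 2
  image_subset : S.image ⊆ S'.map '' closedBall 0 S'.innerRadius
  exists_isGrowth : ∃ ρ y q,
    (∀ x, closedBall x (infDist x S.image) ⊆ U → infDist x S.image ≤ 2 * ρ) ∧
    IsGrowth S.image S'.image (min S.error ρ) ρ y q

variable [FiniteDimensional ℂ E]

theorem isCompact_image (S : Stage U μ k) : IsCompact S.image :=
  S.isExpandingEmbedding.isCompact_image

theorem exists_of_isExpandingEmbedding [BorelSpace E] (μ : Measure E) [IsFiniteMeasureOnCompacts μ]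
    (k : ℕ) {O : Set E} {f : E → E} {r e₀ : ℝ} (hr0 : 0 < r) (hr1 : r < 1)
    (hf : IsExpandingEmbedding f r) (hU : IsOpen U) (hO : IsOpen O) (hOU : O ⊆ U)
    (hfO : f '' closedBall 0 r ⊆ O) (he₀ : 0 < e₀) :
    ∃ S : Stage U μ k, S.map = f ∧ S.innerRadius = r ∧ S.error ≤ e₀ ∧ S.image ⊆ O := by
  have : ProperSpace E := FiniteDimensional.proper ℂ E
  obtain ⟨t₀, ht₀, hrad⟩ := hf.exists_larger_radius hr0.le hO hfO
  obtain ⟨t, hrt, ht⟩ := exists_between (lt_min ht₀ hr1)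
  obtain ⟨hft, htO⟩ := hrad t (ht.trans_le (min_le_left _ _))
  obtain ⟨c, hc, hd, hexp⟩ := hft.exists_expandsOn
  obtain ⟨e₁, he₁, hstab⟩ := exists_stableOn hrt hc hd hexp hU (hfO.trans hOU)
  obtain ⟨δ, hδ, hshell⟩ := exists_measure_thickening_diff_le μ hft.isCompact_image
    (ε := 2⁻¹ ^ k) (by simp)
  obtain ⟨e, he, hee₀, hee₁, heδ⟩ : ∃ e > 0, e ≤ e₀ ∧ e ≤ e₁ ∧ 3 * e ≤ δ :=
    ⟨min e₀ (min e₁ (δ / 3)), by positivity, min_le_left _ _,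
      (min_le_right _ _).trans (min_le_left _ _), by
        linarith [(min_le_right e₀ _).trans (min_le_right e₁ (δ / 3))]⟩
  exact ⟨{  map := f
            innerRadius := r
            radius := t
            error := e
            innerRadius_pos := hr0
            innerRadius_lt := hrt
            radius_lt_one := ht.trans_le (min_le_right _ _)
            error_pos := he
            isExpandingEmbedding := hft
            image_subset := htO.trans hOU
            stableOn := fun g hg hgf => hstab g hg fun z hz => (hgf z hz).trans hee₁
            measure_shell_le :=
              (measure_mono (sdiff_subset_sdiff_left (thickening_mono heδ _))).trans hshell },
    rfl, rfl, hee₀, htO⟩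

theorem exists_isSucc [BorelSpace E] [Nontrivial E] [μ.IsAddHaarMeasure] (hUo : IsOpen U)
    (hU : μ U ≠ ∞) (S : Stage U μ k) : ∃ S' : Stage U μ (k + 1), S.IsSucc S' := by
  have : ProperSpace E := FiniteDimensional.proper ℂ E
  have : NoncompactSpace E := NormedSpace.noncompactSpace ℂ E
  let _ : NormedSpace ℝ E := NormedSpace.restrictScalars ℝ ℂ E
  obtain ⟨y, hpos, hyU, hmax⟩ := exists_almost_largest_infDist S.isCompact_image S.image_nonempty
    hUo S.image_subset (exists_forall_radius_le_of_closedBall_subset μ hU)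
  obtain ⟨ρ, hρ⟩ : ∃ ρ, infDist y S.image = ρ := ⟨_, rfl⟩
  rw [hρ] at hpos hyU hmax
  obtain ⟨δ, hδ, hδU⟩ := (S.isCompact_image.union (isCompact_closedBall y ρ))
    |>.exists_thickening_subset_open hUo (union_subset S.image_subset hyU)
  have he := S.error_pos
  obtain ⟨ε, hε, hεδ, hεe, hερ⟩ : ∃ ε > 0, ε ≤ δ ∧ ε ≤ S.error / 2 ∧ ε ≤ ρ :=
    ⟨min δ (min (S.error / 2) ρ), by positivity, min_le_left _ _,
      (min_le_right _ _).trans (min_le_left _ _), (min_le_right _ _).trans (min_le_right _ _)⟩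
  obtain ⟨r, g, q, hr, hr1, hg, hclose, hgrowth⟩ :=
    S.isExpandingEmbedding.exists_isGrowth S.radius_pos S.radius_lt_one hρ hpos hε
  obtain ⟨S', rfl, rfl, he', hS'⟩ := exists_of_isExpandingEmbedding μ (k + 1)
    (S.radius_pos.trans hr) hr1 hg hUo isOpen_thickening ((thickening_mono hεδ _).trans hδU)
    hgrowth.subset_thickening (half_pos he)
  have hsub : S'.map '' closedBall 0 S'.innerRadius ⊆ S'.image :=
    image_mono (closedBall_subset_closedBall S'.innerRadius_lt.le)
  exact ⟨S', hr, he', fun z hz => (hclose z hz).trans hεe, hgrowth.subset, ρ, y, q, hmax,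
    hgrowth.subset.trans hsub,
    hS'.trans (thickening_mono (le_min (hεe.trans (half_le_self he.le)) hερ) _),
    hgrowth.closedBall_subset.trans hsub, hgrowth.disjoint⟩

theorem nonempty_zero [BorelSpace E] (μ : Measure E) [IsFiniteMeasureOnCompacts μ]
    (hUo : IsOpen U) (hU : U.Nonempty) : Nonempty (Stage U μ 0) := by
  obtain ⟨x, hx⟩ := hU
  obtain ⟨b, hb, hbU⟩ := Metric.isOpen_iff.1 hUo x hx
  have hemb : IsExpandingEmbedding (fun z : E => x + (b : ℂ) • z) (1 / 2) :=
    ⟨1, by norm_num, b, hb, by fun_prop, fun z _ w _ => by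
      rw [add_sub_add_left_eq_sub, ← smul_sub, norm_smul, Complex.norm_of_nonneg hb.le]⟩
  have himage : (fun z : E => x + (b : ℂ) • z) '' closedBall 0 (1 / 2) ⊆ U := by
    rintro _ ⟨z, hz, rfl⟩
    rw [mem_closedBall_zero_iff] at hz
    refine hbU ?_
    rw [mem_ball, dist_eq_norm, add_sub_cancel_left, norm_smul, Complex.norm_of_nonneg hb.le]
    nlinarith
  obtain ⟨S, -⟩ := exists_of_isExpandingEmbedding μ 0 (by norm_num) (by norm_num) hemb hUo hUo
    Subset.rfl himage one_pos
  exact ⟨S⟩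

theorem exists_seq [BorelSpace E] [Nontrivial E] (μ : Measure E) [μ.IsAddHaarMeasure]
    (hUo : IsOpen U) (hne : U.Nonempty) (hU : μ U ≠ ∞) :
    ∃ S : ∀ k, Stage U μ k, ∀ k, (S k).IsSucc (S (k + 1)) := by
  obtain ⟨S₀⟩ := nonempty_zero μ hUo hne
  choose next hnext using fun (k : ℕ) (S : Stage U μ k) => S.exists_isSucc hUo hU
  exact ⟨fun k => Nat.rec S₀ next k, fun k => hnext k _⟩

end Stage

variable {S : ∀ k, Stage U μ k}

theorem isStableSequence_of_isSucc (hS : ∀ k, (S k).IsSucc (S (k + 1))) :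
    IsStableSequence U (fun k => (S k).map) (fun k => (S k).innerRadius) (fun k => (S k).radius)
      fun k => (S k).error where
  radius_pos k := (S k).innerRadius_pos
  radius_lt k := (S k).innerRadius_lt
  lt_radius_succ k := (hS k).radius_lt
  bddAbove := ⟨1, forall_mem_range.2 fun k => ((S k).innerRadius_lt.trans (S k).radius_lt_one).le⟩
  error_succ_le k := (hS k).error_le
  differentiableOn k := (S k).isExpandingEmbedding.differentiableOn.mono ball_subset_closedBall
  norm_sub_le k := (hS k).norm_sub_le
  stableOn k := (S k).stableOn

theorem exists_isExhaustion_of_isSucc (hS : ∀ k, (S k).IsSucc (S (k + 1))) :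
    ∃ ρ y q, IsExhaustion μ U (fun k => (S k).image) (fun k => (S k).error) ρ y q := by
  choose ρ y q hmax hgrowth using fun k => (hS k).exists_isGrowth
  exact ⟨ρ, y, q, fun k => (S k).image_nonempty, fun k => (S k).image_subset,
    fun k => (hS k).error_le, fun k => (S k).measure_shell_le, hmax, hgrowth⟩

end Iteration

end BallFilling

theorem exists_injective_holomorphic_ball_full_measure_general {E : Type*} [NormedAddCommGroup E]
    [InnerProductSpace ℂ E] [FiniteDimensional ℂ E] [MeasurableSpace E] [BorelSpace E]
    (μ : Measure E) [μ.IsAddHaarMeasure] {U : Set E} (hUopen : IsOpen U) (hUconn : IsConnected U)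
    (hUfin : μ U ≠ ⊤) :
    ∃ F : E → E, DifferentiableOn ℂ F (ball 0 1) ∧ Set.InjOn F (ball 0 1) ∧
      F '' ball 0 1 ⊆ U ∧ μ (U \ F '' ball 0 1) = 0 := by
  rcases subsingleton_or_nontrivial E with hE | hE
  · have hU : U = Set.univ := Subsingleton.eq_univ_of_nonempty hUconn.nonempty
    have hball : ball (0 : E) 1 = Set.univ :=
      Subsingleton.eq_univ_of_nonempty ⟨0, mem_ball_self one_pos⟩
    exact ⟨id, differentiableOn_id, Set.injOn_id _, by simp [hU], by simp [hball]⟩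
  · have : CompleteSpace E := FiniteDimensional.complete ℂ E
    let _ : NormedSpace ℝ E := NormedSpace.restrictScalars ℝ ℂ E
    have : FiniteDimensional ℝ E := FiniteDimensional.complexToReal E
    obtain ⟨S, hS⟩ := BallFilling.Stage.exists_seq μ hUopen hUconn.nonempty hUfin
    obtain ⟨F, hd, hinj, hU, hcover⟩ :=
      (BallFilling.isStableSequence_of_isSucc hS).exists_unit_ball
    obtain ⟨ρ, y, q, hexh⟩ := BallFilling.exists_isExhaustion_of_isSucc hS
    refine ⟨F, hd, hinj, hU, measure_mono_null (Set.sdiff_subset_sdiff_right ?_)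
      (hexh.measure_diff_iUnion_eq_zero hUopen hUconn.isPreconnected hUfin)⟩
    exact Set.iUnion_subset fun k => (hS k).image_subset.trans (hcover (k + 1))

/-- **Theorem 1.4** (for bounded connected open sets `U ⊆ ℂ^m`). There is an injective
holomorphic map `F` from the unit ball of `ℂ^m` into `U` whose image has full measure in
`U`, i.e. `U \ F(B^m(0,1))` has Lebesgue measure zero. -/
theorem exists_injective_holomorphic_ball_full_measure {m : ℕ}
    (U : Set (EuclideanSpace ℂ (Fin m)))
    (hUopen : IsOpen U) (hUconn : IsConnected U) (hUbdd : Bornology.IsBounded U) :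
    ∃ F : EuclideanSpace ℂ (Fin m) → EuclideanSpace ℂ (Fin m),
      DifferentiableOn ℂ F (ball 0 1) ∧ Set.InjOn F (ball 0 1) ∧
      F '' ball 0 1 ⊆ U ∧ volume (U \ F '' ball 0 1) = 0 := by
  exact exists_injective_holomorphic_ball_full_measure_general volume hUopen hUconn
    hUbdd.measure_lt_top.ne
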